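/- arXiv:2405.15300 — 2 statements merged into one kernel-verified Lean document; each statement's English description precedes it below -/
import Mathlib

section
/- Let n ≥ 5 and let G = S_n or G = A_n. Then every 5-tuple (H_1, …, H_5) of subgroups of G, each of which is solvable and a maximal subgroup of G, is regular. -/
/-!
Let `G` be the symmetric or the alternating group of degree `n ≥ 5`, and let `M` be a soluble maximal
subgroup of `G`, regarded as a group of permutations. Every group of permutations that contains `M`
but not the alternating group is then soluble (`SolMax`). So `M` lies in the full automorphism group
of any structure it preserves, and that automorphism group is soluble as soon as some 3-cycle does
not preserve the structure (`SolMax.transport`).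

* If `M` is intransitive, it preserves a subset; solubility bounds the subset and its complement by
  four points (`fits_intransitive`).
* If `M` is imprimitive, it preserves a system of `b` blocks of size `a`; solubility gives
  `a, b ≤ 4` (`fits_imprimitive`).
* If `M` is primitive, it consists of affine maps of `(ℤ/p)ᵈ` with `n = pᵈ` (`exists_fitsAff`). The
  affine group must be soluble, while the transvections generate a perfect group when `d ≥ 3`, or
  when `d = 2` and `p ≥ 5`; hence `n = p` or `n = 9` (`fits_primitive`).

This leaves finitely many structures, all of degree at most `16`, and the affine groups of prime
degree `p ≥ 11`. For each of the finitely many combinations, an explicit relabelling of the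
structures leaves no common automorphism, which is verified by a backtracking search
(`certOK_of_kinds`). In prime degree `p ≥ 11`, the affine group meets its conjugate by a 3-cycle or
by a 4-cycle trivially, because an affine map is determined by two of its values
(`affPerm_inter_conj`). The conjugating elements can always be chosen even (`exists_even_of_kinds`,
`exists_even_of_prime`), so the argument covers both groups.
-/

/-- The conjugate `g H g⁻¹` of a subgroup `H` by an element `g`. -/
def conjSub {G : Type*} [Group G] (g : G) (H : Subgroup G) : Subgroup G :=
  H.map (MulAut.conj g).toMonoidHom

/-- A `k`-tuple of subgroups is regular if some intersection of conjugates is trivial. -/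
def IsRegularTuple {G : Type*} [Group G] {k : ℕ} (H : Fin k → Subgroup G) : Prop :=
  ∃ g : Fin k → G, (⨅ i, conjSub (g i) (H i)) = ⊥

open Equiv
open scoped commutatorElement

/-! ### A finite search for trivial intersections of automorphism groups -/

/-- The types of structure on `{0, …, n - 1}` preserved by the soluble maximal subgroups of small
degree: `cut k` is the subset of the first `k` points, `blk a` the partition into blocks of `a`
consecutive points, `aff p` the affine line `ℤ/p`, and `aff9` the affine plane `(ℤ/3)²`. -/
inductive Kind where
  | cut (k : ℕ)
  | blk (a : ℕ)
  | aff (p : ℕ)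
  | aff9

/-- The relation on `ℕ` encoding a structure. For `cut` and `blk` it is binary (the third argument
is ignored); for the affine structures it says that `z` is the midpoint of `x` and `y`, which in odd
characteristic is preserved by every affine map. -/
def Kind.rel : Kind → ℕ → ℕ → ℕ → Bool
  | .cut k, x, y, _ => decide (x < k) == decide (y < k)
  | .blk a, x, y, _ => x / a == y / a
  | .aff p, x, y, z => (x + y) % p == (z + z) % p
  | .aff9, x, y, z => (x / 3 + y / 3) % 3 == (z / 3 + z / 3) % 3 &&
      (x % 3 + y % 3) % 3 == (z % 3 + z % 3) % 3

/-- The permutations of `Fin n` preserving a ternary relation. -/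
def autRel (n : ℕ) (R : ℕ → ℕ → ℕ → Bool) : Subgroup (Equiv.Perm (Fin n)) where
  carrier := {σ | ∀ x y z : Fin n, R (σ x) (σ y) (σ z) = R x y z}
  one_mem' := by simp
  mul_mem' := by
    intro a b ha hb x y z
    simp only [Set.mem_ofPred_eq, Equiv.Perm.coe_mul, Function.comp_apply] at *
    rw [ha, hb]
  inv_mem' := by
    intro a ha x y z
    simpa using (ha (a⁻¹ x) (a⁻¹ y) (a⁻¹ z)).symm

theorem mem_autRel {n : ℕ} {R : ℕ → ℕ → ℕ → Bool} {σ : Equiv.Perm (Fin n)} :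
    σ ∈ autRel n R ↔ ∀ x y z : Fin n, R (σ x) (σ y) (σ z) = R x y z := Iff.rfl

/-- Whether the relation of a structure really depends on its third argument. -/
def Kind.ternary : Kind → Bool
  | .cut _ => false
  | .blk _ => false
  | .aff _ => true
  | .aff9 => true

/-- `A` lists the pairs `(x, f x)` of a partial injection `f` defined on `{0, …, k - 1}`. The test is
necessary for the extension of `f` by `k ↦ v` to be injective and to preserve the relations `Rs`;
the flag attached to a relation tells whether all third arguments are tried. -/
def consistent (Rs : List (Bool × (ℕ → ℕ → ℕ → Bool))) (k v : ℕ) (A : List (ℕ × ℕ)) : Bool :=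
  A.all (fun p => !(p.2 == v)) &&
  Rs.all fun R => A.all fun p => (bif R.1 then (k, v) :: A else [(k, v)]).all fun q =>
    R.2 k p.1 q.1 == R.2 v p.2 q.2

/-- Backtracking search over the values at `k, k + 1, …`, with `m` points left: it returns `true`
only if the identity is the sole permutation of `{0, …, n - 1}` preserving all relations in `Rs`. -/
def rigid (n : ℕ) (Rs : List (Bool × (ℕ → ℕ → ℕ → Bool))) : ℕ → ℕ → List (ℕ × ℕ) → Bool
  | 0, _, A => A.all fun p => p.1 == p.2
  | m + 1, k, A => (List.range n).all fun v =>
      !(consistent Rs k v A) || rigid n Rs m (k + 1) ((k, v) :: A)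

/-- Every `f` preserving the relations survives the search along its own branch, so it is the
identity if the search succeeds. -/
theorem rigid_sound {n : ℕ} {Rs : List (Bool × (ℕ → ℕ → ℕ → Bool))} {f : ℕ → ℕ}
    (hf : ∀ x < n, f x < n) (hinj : ∀ x < n, ∀ y < n, f x = f y → x = y)
    (hR : ∀ R ∈ Rs, ∀ x < n, ∀ y < n, ∀ z < n, R.2 x y z = R.2 (f x) (f y) (f z)) :
    ∀ (m k : ℕ) (A : List (ℕ × ℕ)), k + m = n → (∀ p, p ∈ A ↔ p.1 < k ∧ p.2 = f p.1) →
      rigid n Rs m k A = true → ∀ x < n, f x = x := by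
  intro m
  induction m with
  | zero =>
    intro k A hk hA h x hx
    simp only [rigid, List.all_eq_true, beq_iff_eq] at h
    exact (h (x, f x) ((hA _).2 ⟨by simpa using by omega, rfl⟩)).symm
  | succ m ih =>
    intro k A hk hA h
    have hA' : ∀ p, p ∈ (k, f k) :: A ↔ p.1 < k + 1 ∧ p.2 = f p.1 := by
      rintro ⟨a, b⟩
      simp only [List.mem_cons, hA, Prod.mk.injEq]
      constructor
      · rintro (⟨rfl, rfl⟩ | ⟨h1, h2⟩)
        · exact ⟨by omega, rfl⟩
        · exact ⟨by omega, h2⟩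
      · rintro ⟨h1, h2⟩
        rcases Nat.lt_succ_iff_lt_or_eq.1 h1 with h | rfl
        · exact Or.inr ⟨h, h2⟩
        · exact Or.inl ⟨rfl, h2⟩
    refine ih (k + 1) ((k, f k) :: A) (by omega) hA' ?_
    simp only [rigid, List.all_eq_true, List.mem_range] at h
    have h1 := h (f k) (hf k (by omega))
    have hc : consistent Rs k (f k) A = true := by
      simp only [consistent, Bool.and_eq_true, List.all_eq_true]
      refine ⟨fun p hp => ?_, fun R hRR p hp q hq => ?_⟩
      · have hp' := (hA p).1 hp
        have : p.2 ≠ f k := fun e => by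
          have := hinj p.1 (by omega) k (by omega) (hp'.2 ▸ e)
          omega
        simpa using this
      · have hp' := (hA' p).1 (List.mem_cons_of_mem _ hp)
        have hq' := (hA' q).1 (by
          cases hb : R.1 <;> simp only [hb, cond_true, cond_false] at hq
          · exact List.mem_cons.2 (Or.inl (by simpa using hq))
          · exact hq)
        rw [hp'.2, hq'.2, beq_iff_eq]
        exact hR R hRR k (by omega) p.1 (by omega) q.1 (by omega)
    simpa [hc] using h1

/-- The relation of a structure pulled back along the relabelling given by a list of values. -/
def pull (p : Kind × List ℕ) (x y z : ℕ) : Bool :=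
  p.1.rel (p.2.getD x 0) (p.2.getD y 0) (p.2.getD z 0)

/-- The search `rigid` run for all choices of a structure in `ks` for each position, the structure
`t` in the position of `c` being relabelled by `c t`. -/
def rigidAll (n : ℕ) (ks : List Kind) :
    List (Kind → List ℕ) → List (Kind × List ℕ) → Bool
  | [], ps => rigid n (ps.map fun p => (p.1.ternary, pull p)) n 0 []
  | c :: cs, ps => ks.all fun t => rigidAll n ks cs ((t, c t) :: ps)

theorem rigidAll_sound {n : ℕ} {ks : List Kind} : ∀ (cs : List (Kind → List ℕ))
    (ps : List (Kind × List ℕ)), rigidAll n ks cs ps = true →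
    ∀ ts : ℕ → Kind, (∀ j, ts j ∈ ks) →
    ∃ rs : List (Kind × List ℕ),
      (∀ r ∈ rs, r ∈ ps ∨ ∃ (j : ℕ) (h : j < cs.length), r = (ts j, cs[j] (ts j))) ∧
      rigid n (rs.map fun p => (p.1.ternary, pull p)) n 0 [] = true
  | [], ps, h, ts, hq => ⟨ps, fun r hr => Or.inl hr, h⟩
  | c :: cs, ps, h, ts, hq => by
    simp only [rigidAll, List.all_eq_true] at h
    obtain ⟨rs, hrs, hr⟩ := rigidAll_sound cs ((ts 0, c (ts 0)) :: ps) (h _ (hq 0))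
      (fun j => ts (j + 1)) (fun j => hq _)
    refine ⟨rs, fun r hr' => ?_, hr⟩
    rcases hrs r hr' with h | ⟨j, hj, h⟩
    · rcases List.mem_cons.1 h with rfl | h
      · exact Or.inr ⟨0, by simp, by simp⟩
      · exact Or.inl h
    · exact Or.inr ⟨j + 1, by simpa using hj, by simpa using h⟩

/-- The first `n` entries of `w` are the values of a permutation of `{0, …, n - 1}`. -/
def isPermList (n : ℕ) (w : List ℕ) : Bool :=
  (List.range n).all fun x => decide (w.getD x 0 < n) &&
    (List.range n).all fun y => x == y || !(w.getD x 0 == w.getD y 0)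

theorem exists_perm_of_isPermList {n : ℕ} {w : List ℕ} (h : isPermList n w = true) :
    ∃ e : Equiv.Perm (Fin n), ∀ x : Fin n, ((e x : Fin n) : ℕ) = w.getD x 0 := by
  simp only [isPermList, List.all_eq_true, List.mem_range, Bool.and_eq_true, decide_eq_true_eq,
    Bool.or_eq_true, beq_iff_eq, Bool.not_eq_true', beq_eq_false_iff_ne] at h
  let f : Fin n → Fin n := fun x => ⟨w.getD x 0, (h x x.2).1⟩
  have hf : Function.Injective f := by
    intro x y hxy
    rcases (h x x.2).2 y y.2 with h1 | h1
    · exact Fin.ext h1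
    · exact absurd (congrArg Fin.val hxy) h1
  exact ⟨Equiv.ofBijective f (Finite.injective_iff_bijective.1 hf), fun x => rfl⟩

/-- The structures that occur in degree `n`; primes `n ≥ 11` are treated separately. -/
def kinds : ℕ → List Kind
  | 5 => [.cut 1, .cut 2, .aff 5]
  | 6 => [.cut 2, .blk 3, .blk 2]
  | 7 => [.cut 3, .aff 7]
  | 8 => [.blk 4, .blk 2]
  | 9 => [.blk 3, .aff9]
  | 12 => [.blk 3, .blk 4]
  | 16 => [.blk 4]
  | _ => []

/-- Relabellings, one for each position and each structure, after which the chosen structures have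
no common nontrivial automorphism. At most five positions are needed. -/
def cert : ℕ → List (Kind → List ℕ)
  | 5 => [fun _ => [0, 1, 2, 3, 4], fun _ => [1, 2, 3, 4, 0], fun _ => [3, 0, 4, 2, 1],
      fun _ => [1, 2, 4, 0, 3]]
  | 6 =>
    [fun | .cut _ => [0, 2, 1, 3, 4, 5] | .blk 3 => [0, 1, 3, 2, 4, 5] | _ => [0, 1, 2, 4, 3, 5],
     fun | .cut _ => [2, 0, 1, 3, 4, 5] | .blk 3 => [0, 1, 3, 4, 5, 2] | _ => [0, 2, 3, 4, 1, 5],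
     fun | .cut _ => [0, 2, 3, 4, 5, 1] | .blk 3 => [0, 3, 1, 4, 2, 5] | _ => [0, 2, 4, 5, 1, 3],
     fun | .cut _ => [2, 3, 4, 5, 0, 1] | .blk 3 => [0, 3, 4, 5, 1, 2] | _ => [0, 2, 1, 3, 4, 5]]
  | 7 => [fun _ => [0, 1, 2, 3, 4, 5, 6], fun _ => [0, 4, 3, 1, 6, 2, 5],
      fun _ => [5, 1, 6, 0, 4, 3, 2]]
  | 8 => [fun _ => [0, 1, 2, 3, 4, 5, 6, 7], fun _ => [4, 7, 2, 5, 6, 0, 3, 1],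
      fun _ => [7, 0, 2, 1, 6, 4, 3, 5], fun _ => [2, 0, 5, 7, 3, 6, 4, 1],
      fun _ => [0, 2, 6, 1, 4, 5, 7, 3]]
  | 9 => [fun _ => [0, 1, 2, 3, 4, 5, 6, 7, 8], fun _ => [5, 1, 4, 2, 7, 3, 0, 6, 8],
      fun _ => [8, 7, 2, 3, 1, 4, 6, 5, 0]]
  | 12 => [fun _ => [0, 1, 2, 3, 4, 5, 6, 7, 8, 9, 10, 11],
      fun _ => [8, 11, 3, 10, 5, 2, 1, 7, 0, 9, 6, 4],
      fun _ => [7, 0, 2, 11, 6, 1, 5, 9, 10, 4, 8, 3]]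
  | 16 => [fun _ => [0, 1, 2, 3, 4, 5, 6, 7, 8, 9, 10, 11, 12, 13, 14, 15],
      fun _ => [6, 10, 13, 0, 8, 2, 3, 5, 15, 9, 11, 12, 4, 1, 7, 14],
      fun _ => [9, 10, 14, 0, 1, 8, 5, 6, 12, 3, 11, 4, 2, 7, 13, 15]]
  | _ => []

/-- The finite check that `cert n` has the required property. -/
def certOK (n : ℕ) : Bool :=
  rigidAll n (kinds n) (cert n) [] && decide ((cert n).length ≤ 5) &&
    (cert n).all fun c => (kinds n).all fun t => isPermList n (c t)

set_option maxRecDepth 100000 in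
theorem certOK_of_kinds (n : ℕ) {t : Kind} (h : t ∈ kinds n) : certOK n = true := by
  unfold kinds at h
  split at h
  iterate 7 decide +kernel
  simp at h

/-- Whatever structures from `kinds n` are prescribed, five suitable conjugates of their automorphism
groups intersect trivially. -/
theorem exists_trivial_intersection {n : ℕ} {ts : Fin 5 → Kind} (hts : ∀ i, ts i ∈ kinds n) :
    ∃ w : Fin 5 → Equiv.Perm (Fin n), ∀ σ : Equiv.Perm (Fin n),
      (∀ i, w i * σ * (w i)⁻¹ ∈ autRel n (ts i).rel) → σ = 1 := by
  have hc := certOK_of_kinds n (hts 0)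
  simp only [certOK, Bool.and_eq_true, decide_eq_true_eq, List.all_eq_true] at hc
  obtain ⟨⟨hr, hl⟩, hp⟩ := hc
  have key : ∀ i : Fin 5, ∃ e : Equiv.Perm (Fin n), ∀ hi : (i : ℕ) < (cert n).length,
      ∀ x : Fin n, ((e x : Fin n) : ℕ) = ((cert n)[(i : ℕ)] (ts i)).getD x 0 := by
    intro i
    by_cases hi : (i : ℕ) < (cert n).length
    · obtain ⟨e, he⟩ := exists_perm_of_isPermList (hp _ (List.getElem_mem hi) _ (hts i))
      exact ⟨e, fun _ => he⟩
    · exact ⟨1, fun h => absurd h hi⟩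
  choose w hw using key
  refine ⟨w, fun σ hσ => ?_⟩
  obtain ⟨rs, hrs, hrig⟩ := rigidAll_sound (cert n) [] hr (fun j => ts (Fin.ofNat 5 j))
    (fun j => hts _)
  let f : ℕ → ℕ := fun x => if h : x < n then σ ⟨x, h⟩ else x
  have hfx : ∀ x : Fin n, f x = σ x := fun x => by simp [f]
  have := rigid_sound (n := n) (f := f) (fun x hx => by simp [f, hx])
    (fun x hx y hy hxy => by simpa [f, hx, hy, Fin.val_inj] using hxy) (fun R hR x hx y hy z hz => ?_)
    n 0 [] (by simp) (by simp) hrig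
  · ext x
    rw [← hfx, this x x.2]; rfl
  · obtain ⟨r, hr1, rfl⟩ := List.mem_map.1 hR
    rcases hrs r hr1 with h | ⟨j, hj, h⟩
    · simp at h
    · have hj5 : ((Fin.ofNat 5 j : Fin 5) : ℕ) = j := Nat.mod_eq_of_lt (by omega)
      set i : Fin 5 := Fin.ofNat 5 j with hi
      have hij : j = (i : ℕ) := hj5.symm
      have hil : (i : ℕ) < (cert n).length := hij ▸ hj
      have hr2 : r = (ts i, (cert n)[(i : ℕ)] (ts i)) := by
        have hgen : ∀ (a b : ℕ) (ha : a < (cert n).length) (hb : b < (cert n).length), a = b →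
            (cert n)[a] = (cert n)[b] := by rintro a _ _ _ rfl; rfl
        rw [h, hgen j i hj hil hij]
      have hwi := hw i hil
      have hσi := hσ i (w i ⟨x, hx⟩) (w i ⟨y, hy⟩) (w i ⟨z, hz⟩)
      have e1 : f x = σ ⟨x, hx⟩ := hfx ⟨x, hx⟩
      have e2 : f y = σ ⟨y, hy⟩ := hfx ⟨y, hy⟩
      have e3 : f z = σ ⟨z, hz⟩ := hfx ⟨z, hz⟩
      simp only [Equiv.Perm.mul_apply, Equiv.Perm.inv_def, Equiv.symm_apply_apply, hwi] at hσi
      rw [hr2]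
      simp only [pull, e1, e2, e3]
      exact hσi.symm

/-! ### Conjugation by even permutations, and affine groups of prime degree -/

/-- A transposition inside a fibre of `g` preserves any relation defined through `g`. -/
theorem swap_mem_autRel {n : ℕ} {α : Type*} (g : ℕ → α) (F : α → α → Bool) {a b : Fin n}
    (hab : g a = g b) : swap a b ∈ autRel n (fun x y _ => F (g x) (g y)) := by
  have h : ∀ x : Fin n, g (swap a b x : Fin n) = g x := by
    intro x
    rcases eq_or_ne x a with rfl | hxa
    · rw [swap_apply_left, hab]
    rcases eq_or_ne x b with rfl | hxb
    · rw [swap_apply_right, hab]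
    · rw [swap_apply_of_ne_of_ne hxa hxb]
  intro x y z
  simp only [h]

theorem exists_odd_of_swap {n : ℕ} {α : Type*} (g : ℕ → α) (F : α → α → Bool) (a b : Fin n)
    (hne : a ≠ b) (hab : g a = g b) :
    ∃ c ∈ autRel n (fun x y _ => F (g x) (g y)), Perm.sign c = -1 :=
  ⟨swap a b, swap_mem_autRel g F hab, Perm.sign_swap hne⟩

theorem exists_odd_cut {n : ℕ} (k : ℕ) (a b : Fin n) (hne : a ≠ b)
    (hab : decide ((a : ℕ) < k) = decide ((b : ℕ) < k)) :
    ∃ c ∈ autRel n (Kind.cut k).rel, Perm.sign c = -1 :=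
  exists_odd_of_swap (fun x => decide (x < k)) (fun u v => u == v) a b hne hab

theorem exists_odd_blk {n : ℕ} (k : ℕ) (a b : Fin n) (hne : a ≠ b)
    (hab : (a : ℕ) / k = (b : ℕ) / k) :
    ∃ c ∈ autRel n (Kind.blk k).rel, Perm.sign c = -1 :=
  exists_odd_of_swap (fun x => x / k) (fun u v => u == v) a b hne hab

instance {n : ℕ} (R : ℕ → ℕ → ℕ → Bool) (σ : Perm (Fin n)) : Decidable (σ ∈ autRel n R) :=
  decidable_of_iff _ mem_autRel.symm

set_option maxRecDepth 100000 in
/-- Each of the automorphism groups contains an odd permutation, so its conjugates under the symmetric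
group are already conjugates under the alternating group. -/
theorem exists_odd {n : ℕ} {t : Kind} (h : t ∈ kinds n) :
    ∃ c ∈ autRel n t.rel, Perm.sign c = -1 := by
  unfold kinds at h
  split at h <;> simp only [List.mem_cons, List.not_mem_nil, or_false] at h
  · rcases h with rfl | rfl | rfl
    · exact exists_odd_cut 1 3 4 (by decide) (by decide)
    · exact exists_odd_cut 2 3 4 (by decide) (by decide)
    · refine ⟨swap 1 2 * swap 2 4 * swap 4 3, by decide +kernel, ?_⟩
      simp only [map_mul]
      rw [Perm.sign_swap (by decide), Perm.sign_swap (by decide), Perm.sign_swap (by decide)]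
      rfl
  · rcases h with rfl | rfl | rfl
    · exact exists_odd_cut 2 4 5 (by decide) (by decide)
    · exact exists_odd_blk 3 4 5 (by decide) (by decide)
    · exact exists_odd_blk 2 4 5 (by decide) (by decide)
  · rcases h with rfl | rfl
    · exact exists_odd_cut 3 5 6 (by decide) (by decide)
    · refine ⟨swap 1 6 * swap 2 5 * swap 3 4, by decide +kernel, ?_⟩
      simp only [map_mul]
      rw [Perm.sign_swap (by decide), Perm.sign_swap (by decide), Perm.sign_swap (by decide)]
      rfl
  · rcases h with rfl | rfl
    · exact exists_odd_blk 4 6 7 (by decide) (by decide)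
    · exact exists_odd_blk 2 6 7 (by decide) (by decide)
  · rcases h with rfl | rfl
    · exact exists_odd_blk 3 7 8 (by decide) (by decide)
    · refine ⟨swap 1 2 * swap 4 5 * swap 7 8, by decide +kernel, ?_⟩
      simp only [map_mul]
      rw [Perm.sign_swap (by decide), Perm.sign_swap (by decide), Perm.sign_swap (by decide)]
      rfl
  · rcases h with rfl | rfl
    · exact exists_odd_blk 3 10 11 (by decide) (by decide)
    · exact exists_odd_blk 4 10 11 (by decide) (by decide)
  · subst h
    exact exists_odd_blk 4 14 15 (by decide) (by decide)

/-- `M` is contained in a conjugate of the automorphism group of `R`. -/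
def Fits {n : ℕ} (M : Subgroup (Perm (Fin n))) (R : ℕ → ℕ → ℕ → Bool) : Prop :=
  ∃ τ : Perm (Fin n), ∀ σ ∈ M, τ * σ * τ⁻¹ ∈ autRel n R

/-- The five conjugating elements can be corrected to be even by odd automorphisms of the structures. -/
theorem exists_even_of_kinds {n : ℕ} (M : Fin 5 → Subgroup (Perm (Fin n))) (ts : Fin 5 → Kind)
    (hts : ∀ i, ts i ∈ kinds n) (hM : ∀ i, Fits (M i) (ts i).rel) :
    ∃ g : Fin 5 → Perm (Fin n), (∀ i, g i ∈ alternatingGroup (Fin n)) ∧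
      ∀ σ, (∀ i, (g i)⁻¹ * σ * g i ∈ M i) → σ = 1 := by
  obtain ⟨w, hw⟩ := exists_trivial_intersection hts
  choose τ hτ using hM
  have key : ∀ i, ∃ c ∈ autRel n (ts i).rel, Perm.sign ((w i)⁻¹ * c * τ i) = 1 := by
    intro i
    rcases Int.units_eq_one_or (Perm.sign ((w i)⁻¹ * τ i)) with h | h
    · exact ⟨1, one_mem _, by simpa using h⟩
    · obtain ⟨c, hc, hs⟩ := exists_odd (hts i)
      refine ⟨c, hc, ?_⟩
      simp only [map_mul, hs] at h ⊢
      rw [mul_right_comm, h]; rfl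
  choose c hc hs using key
  refine ⟨fun i => (w i)⁻¹ * c i * τ i, fun i => Perm.mem_alternatingGroup.2 (hs i),
    fun σ hσ => hw σ fun i => ?_⟩
  have h1 := hτ i _ (hσ i)
  have h2 := mul_mem (mul_mem (hc i) h1) (inv_mem (hc i))
  convert h2 using 1
  group

/-- The affine permutations of an additive group. -/
def affPerm (V : Type*) [AddCommGroup V] : Subgroup (Perm V) where
  carrier := {σ | ∀ x y z, σ (x + y - z) = σ x + σ y - σ z}
  one_mem' := by simp
  mul_mem' := by
    intro a b ha hb x y z
    simp only [Set.mem_ofPred_eq, Perm.coe_mul, Function.comp_apply] at *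
    rw [hb, ha]
  inv_mem' := by
    intro a ha x y z
    rw [Perm.inv_eq_iff_eq, ha]
    simp

theorem mem_affPerm {V : Type*} [AddCommGroup V] {σ : Perm V} :
    σ ∈ affPerm V ↔ ∀ x y z, σ (x + y - z) = σ x + σ y - σ z := Iff.rfl

theorem affPerm_zmod {p : ℕ} {σ : Perm (ZMod p)} (h : σ ∈ affPerm (ZMod p)) (x : ZMod p) :
    σ x = (σ 1 - σ 0) * x + σ 0 := by
  let f : ZMod p →+ ZMod p :=
    { toFun := fun x => σ x - σ 0
      map_zero' := by simp
      map_add' := fun x y => by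
        have := mem_affPerm.1 h x y 0
        rw [sub_zero] at this
        rw [this]; abel }
  have h1 : f x = x * f 1 := by
    have := ZMod.map_smul f x 1
    simpa using this
  have h2 : σ x - σ 0 = x * (σ 1 - σ 0) := h1
  linear_combination h2

/-- An affine map of a prime field is determined by its values at two points. -/
theorem affPerm_zmod_ext {p : ℕ} [Fact p.Prime] {σ τ : Perm (ZMod p)} (hσ : σ ∈ affPerm (ZMod p))
    (hτ : τ ∈ affPerm (ZMod p)) {x y : ZMod p} (hxy : x ≠ y) (hx : σ x = τ x) (hy : σ y = τ y) :
    σ = τ := by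
  rw [affPerm_zmod hσ, affPerm_zmod hτ] at hx hy
  have h1 : (x - y) * ((σ 1 - σ 0) - (τ 1 - τ 0)) = 0 := by linear_combination hx - hy
  have h2 : (σ 1 - σ 0) - (τ 1 - τ 0) = 0 :=
    (mul_eq_zero.1 h1).resolve_left (sub_ne_zero.2 hxy)
  ext z
  rw [affPerm_zmod hσ, affPerm_zmod hτ]
  linear_combination hx + (z - x) * h2

/-- If `s` moves only the points `0, 1, 2, 3`, then `x` and `s⁻¹ x s` agree off at most eight points,
hence at two points at least, so they are equal. Thus `x` commutes with `s`, preserves the support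
of `s`, and comparing values there leaves only the identity. -/
theorem affPerm_inter_conj {p : ℕ} [Fact p.Prime] (hp : 11 ≤ p) {s x : Perm (ZMod p)}
    (hfix : ∀ t, t ∉ ({0, 1, 2, 3} : Finset (ZMod p)) → s t = t)
    (h0 : s 0 = 1) (h1 : s 1 = 2) (h23 : (s 2 = 0 ∧ s 3 = 3) ∨ (s 2 = 3 ∧ s 3 = 0))
    (hx : x ∈ affPerm (ZMod p)) (hsx : s⁻¹ * x * s ∈ affPerm (ZMod p)) : x = 1 := by
  classical
  set F : Finset (ZMod p) := {0, 1, 2, 3} with hF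
  have hFc : F.card ≤ 4 := Finset.card_le_four
  have hcomm : s⁻¹ * x * s = x := by
    set B := F ∪ F.image x.symm
    have hB : B.card ≤ 8 := (Finset.card_union_le _ _).trans
      (by have := Finset.card_image_le (s := F) (f := x.symm); omega)
    have hBc : 1 < (Finset.univ \ B).card := by
      have := Finset.le_card_sdiff B Finset.univ
      rw [Finset.card_univ, ZMod.card] at this
      omega
    obtain ⟨a, ha, b, hb, hab⟩ := Finset.one_lt_card.1 hBc
    have key : ∀ t ∈ Finset.univ \ B, (s⁻¹ * x * s) t = x t := by
      intro t ht
      simp only [B, Finset.mem_sdiff, Finset.mem_univ, true_and, Finset.mem_union,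
        Finset.mem_image, not_or, not_exists, not_and] at ht
      have h2 : s (x t) = x t := hfix _ fun h => ht.2 _ h (by simp)
      rw [Perm.mul_apply, Perm.mul_apply, hfix t ht.1, Perm.inv_eq_iff_eq, h2]
    exact affPerm_zmod_ext hsx hx hab (key a ha) (key b hb)
  have hcomm' : ∀ t, x (s t) = s (x t) := fun t => by
    have := congrArg (fun q : Perm (ZMod p) => s (q t)) hcomm
    simpa using this
  have hnat : ∀ m : ℕ, 0 < m → m < 11 → (m : ZMod p) ≠ 0 := fun m h1 h2 h3 => by
    have := Nat.le_of_dvd h1 ((ZMod.natCast_eq_zero_iff _ _).1 h3)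
    omega
  have n1 := hnat 1 (by norm_num) (by norm_num)
  have n2 := hnat 2 (by norm_num) (by norm_num)
  have n3 := hnat 3 (by norm_num) (by norm_num)
  have n4 := hnat 4 (by norm_num) (by norm_num)
  push_cast at n1 n2 n3 n4
  have e1 : x 1 = s (x 0) := by rw [← hcomm', h0]
  have e2 : x 2 = s (x 1) := by rw [← hcomm', h1]
  have e3 := affPerm_zmod hx 2
  have hx0 : x 0 ∈ F := by
    by_contra h
    have := hfix _ h
    rw [← hcomm', h0] at this
    exact one_ne_zero (x.injective this)
  have e4 : x 0 = 0 := by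
    simp only [hF, Finset.mem_insert, Finset.mem_singleton] at hx0
    rcases hx0 with h | h | h | h
    · exact h
    all_goals
      exfalso
      rcases h23 with ⟨ha, hb⟩ | ⟨ha, hb⟩
      all_goals
        rw [e2, e1, h] at e3
        simp only [h0, h1, ha, hb] at e3
        first
          | exact n1 (by linear_combination e3)
          | exact n2 (by linear_combination e3)
          | exact n3 (by linear_combination e3)
          | exact n4 (by linear_combination e3)
          | exact n1 (by linear_combination -e3)
          | exact n2 (by linear_combination -e3)
          | exact n3 (by linear_combination -e3)
          | exact n4 (by linear_combination -e3)
          | exact n1 (x.injective (by rw [e1, h, hb]) : (1 : ZMod p) = 0)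
          | (have e5 := affPerm_zmod hx 3
             rw [← ha, hcomm', e2, e1, h, ha] at e5
             simp only [h1, ha, hb] at e5
             exact n4 (by linear_combination -e5))
  refine affPerm_zmod_ext hx (one_mem _) (zero_ne_one) (by simpa using e4) ?_
  rw [e1, e4, h0]; rfl

/-- The cycles `(0 1 2)` and `(0 1 2 3)` are permutations as in `affPerm_inter_conj`, one of each sign. -/
theorem exists_shift_perm {p : ℕ} [Fact p.Prime] (hp : 11 ≤ p) (u : ℤˣ) :
    ∃ s : Perm (ZMod p), Perm.sign s = u ∧ (∀ t, t ∉ ({0, 1, 2, 3} : Finset (ZMod p)) → s t = t) ∧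
      s 0 = 1 ∧ s 1 = 2 ∧ ((s 2 = 0 ∧ s 3 = 3) ∨ (s 2 = 3 ∧ s 3 = 0)) := by
  have hnat : ∀ a b : ℕ, a < 11 → b < 11 → a ≠ b → (a : ZMod p) ≠ b := fun a b h1 h2 h3 h4 => by
    rw [ZMod.natCast_eq_natCast_iff'] at h4
    rw [Nat.mod_eq_of_lt (by omega), Nat.mod_eq_of_lt (by omega)] at h4
    exact h3 h4
  have n01 := hnat 0 1 (by norm_num) (by norm_num) (by norm_num)
  have n02 := hnat 0 2 (by norm_num) (by norm_num) (by norm_num)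
  have n03 := hnat 0 3 (by norm_num) (by norm_num) (by norm_num)
  have n12 := hnat 1 2 (by norm_num) (by norm_num) (by norm_num)
  have n13 := hnat 1 3 (by norm_num) (by norm_num) (by norm_num)
  have n23 := hnat 2 3 (by norm_num) (by norm_num) (by norm_num)
  push_cast at n01 n02 n03 n12 n13 n23
  rcases Int.units_eq_one_or u with rfl | rfl
  · refine ⟨swap 0 1 * swap 1 2, ?_, ?_, ?_, ?_, Or.inl ⟨?_, ?_⟩⟩
    · rw [map_mul, Perm.sign_swap n01, Perm.sign_swap n12]; rfl
    · intro t ht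
      simp only [Finset.mem_insert, Finset.mem_singleton, not_or] at ht
      simp [swap_apply_of_ne_of_ne, ht]
    all_goals simp [swap_apply_def, n01, n02, n02.symm, n03.symm, n12.symm, n13.symm, n23.symm]
  · refine ⟨swap 0 1 * swap 1 2 * swap 2 3, ?_, ?_, ?_, ?_, Or.inr ⟨?_, ?_⟩⟩
    · rw [map_mul, map_mul, Perm.sign_swap n01, Perm.sign_swap n12, Perm.sign_swap n23]; rfl
    · intro t ht
      simp only [Finset.mem_insert, Finset.mem_singleton, not_or] at ht
      simp [swap_apply_of_ne_of_ne, ht]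
    all_goals simp [swap_apply_def, n01, n02, n03, n12, n13, n02.symm, n03.symm,
      n12.symm, n13.symm, n23.symm]

/-- In the coordinates of some bijection with `V`, every element of `M` is affine. -/
def FitsAff {X : Type*} (V : Type*) [AddCommGroup V] (M : Subgroup (Perm X)) : Prop :=
  ∃ e : X ≃ V, ∀ σ ∈ M, e.permCongr σ ∈ affPerm V

/-- In prime degree at least `11` two conjugates of the affine group, by even elements, already meet
trivially; the remaining three conjugating elements are immaterial. -/
theorem exists_even_of_prime {p : ℕ} [Fact p.Prime] (hp : 11 ≤ p)
    (M : Fin 5 → Subgroup (Perm (Fin p))) (hM : ∀ i, FitsAff (ZMod p) (M i)) :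
    ∃ g : Fin 5 → Perm (Fin p), (∀ i, g i ∈ alternatingGroup (Fin p)) ∧
      ∀ σ, (∀ i, (g i)⁻¹ * σ * g i ∈ M i) → σ = 1 := by
  obtain ⟨e₀, h₀⟩ := hM 0
  obtain ⟨e₁, h₁⟩ := hM 1
  obtain ⟨s, hs, hfix, hs0, hs1, hs23⟩ := exists_shift_perm hp (Perm.sign (e₁.trans e₀.symm))
  set r : Perm (Fin p) := e₀.symm.permCongr s * (e₁.trans e₀.symm) with hr
  have hsign : Perm.sign r = 1 := by
    rw [hr, map_mul, Perm.sign_permCongr, hs]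
    exact Int.units_mul_self _
  refine ⟨fun i => if i = 1 then r else 1, fun i => ?_, fun σ hσ => ?_⟩
  · rw [Perm.mem_alternatingGroup]
    change Perm.sign (if i = 1 then r else 1) = 1
    split_ifs
    · exact hsign
    · simp
  · have a0 : σ ∈ M 0 := by simpa using hσ 0
    have a1 : r⁻¹ * σ * r ∈ M 1 := by simpa using hσ 1
    have b0 := h₀ _ a0
    have b1 := h₁ _ a1
    have hconj : e₁.permCongr (r⁻¹ * σ * r) = s⁻¹ * e₀.permCongr σ * s := by
      have hri : ∀ y, r⁻¹ y = e₁.symm (s⁻¹ (e₀ y)) := fun y => by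
        rw [Perm.inv_eq_iff_eq]
        simp [hr, permCongr_apply]
      ext x
      simp only [permCongr_apply, Perm.mul_apply, hri]
      simp [hr, permCongr_apply]
    rw [hconj] at b1
    have := affPerm_inter_conj hp hfix hs0 hs1 hs23 b0 b1
    ext x
    have h2 := congrArg (fun q : Perm (ZMod p) => q (e₀ x)) this
    simp only [permCongr_apply, symm_apply_apply, Perm.coe_one, id_eq, EmbeddingLike.apply_eq_iff_eq] at h2
    rw [h2]; rfl

/-! ### Intransitive groups and the sizes of block systems -/

/-- Every subgroup above `M` that does not contain the alternating group is soluble. -/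
def SolMax {X : Type*} [Fintype X] [DecidableEq X] (M : Subgroup (Perm X)) : Prop :=
  ∀ L : Subgroup (Perm X), M ≤ L → ¬ alternatingGroup X ≤ L → Group.IsSolvable L

/-- If `M` preserves a structure with automorphism group `A`, and some 3-cycle does not, then `A` is
soluble. -/
theorem SolMax.transport {X V : Type*} [Fintype X] [DecidableEq X] {M : Subgroup (Perm X)}
    [Fintype V] [DecidableEq V] (hM : SolMax M) (e : X ≃ V) (A : Subgroup (Perm V))
    (hA : ∀ σ ∈ M, e.permCongr σ ∈ A) {c : Perm V} (hc : c.IsThreeCycle) (hcA : c ∉ A) :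
    Group.IsSolvable A := by
  let φ : Perm X →* Perm V := e.permCongrHom.toMonoidHom
  have hφ : ∀ σ, φ σ = e.permCongr σ := fun σ => rfl
  have h1 : Group.IsSolvable (A.comap φ) := by
    refine hM _ (fun σ hσ => hA σ hσ) fun hle => hcA ?_
    have : e.symm.permCongr c ∈ alternatingGroup X := by
      rw [Perm.mem_alternatingGroup, Perm.sign_permCongr]
      exact Perm.mem_alternatingGroup.1 hc.mem_alternatingGroup
    have h2 := hle this
    rw [Subgroup.mem_comap, hφ] at h2
    convert h2 using 1
    ext x; simp [permCongr_apply]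
  refine Group.isSolvable_of_isSolvable_injective (f := (e.symm.permCongrHom.toMonoidHom.comp A.subtype).codRestrict
    (A.comap φ) fun a => ?_) ?_
  · rw [Subgroup.mem_comap, hφ]
    have : e.permCongr (e.symm.permCongr (a : Perm V)) = a := by
      ext x; simp [permCongr_apply]
    exact this.symm ▸ a.2
  · intro a b hab
    have := congrArg Subtype.val hab
    exact Subtype.ext (e.symm.permCongrHom.injective this)

/-- A soluble group contains no symmetric group of degree at least five. -/
theorem card_le_four_of_hom {F V : Type*} [Finite F] (A : Subgroup (Perm V)) [Group.IsSolvable A]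
    (f : Perm F →* Perm V) (hf : Function.Injective f) (hA : ∀ π, f π ∈ A) : Nat.card F ≤ 4 := by
  by_contra h
  refine Equiv.Perm.not_isSolvable F ?_ (Group.isSolvable_of_isSolvable_injective
    (f := f.codRestrict A hA) fun a b hab => hf (congrArg Subtype.val hab))
  have h5 : 5 ≤ Nat.card F := by omega
  rw [← Nat.cast_card]
  exact_mod_cast h5

theorem exists_ne_three {V : Type*} [Fintype V] (h : 4 ≤ Fintype.card V) (a b c : V) :
    ∃ d, d ≠ a ∧ d ≠ b ∧ d ≠ c := by
  classical
  have : ({a, b, c} : Finset V) ≠ Finset.univ := fun h' => by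
    have h3 : ({a, b, c} : Finset V).card ≤ 3 := Finset.card_le_three
    rw [h', Finset.card_univ] at h3
    omega
  obtain ⟨d, hd⟩ : ∃ d, d ∉ ({a, b, c} : Finset V) := by
    by_contra! h2
    exact this (Finset.eq_univ_iff_forall.2 h2)
  simp only [Finset.mem_insert, Finset.mem_singleton, not_or] at hd
  exact ⟨d, hd⟩

/-- An invariant proper subset has at most four points, since the stabiliser of the subset contains
the full symmetric group on it. -/
theorem SolMax.card_le_four_of_invariant {X : Type*} [Fintype X] [DecidableEq X] {M : Subgroup (Perm X)} (hM : SolMax M)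
    (h5 : 5 ≤ Fintype.card X) (p : X → Prop) [DecidablePred p]
    (hp : ∀ σ ∈ M, ∀ x, p (σ x) ↔ p x) {x y : X} (hx : p x) (hy : ¬ p y) :
    Nat.card {x // p x} ≤ 4 := by
  let A : Subgroup (Perm X) :=
    { carrier := {σ | ∀ x, p (σ x) ↔ p x}
      one_mem' := by simp
      mul_mem' := by
        intro a b ha hb x
        simp only [Set.mem_ofPred_eq, Perm.coe_mul, Function.comp_apply] at *
        rw [ha, hb]
      inv_mem' := by
        intro a ha x
        simpa using (ha (a⁻¹ x)).symm }
  have hxy : x ≠ y := fun h => hy (h ▸ hx)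
  obtain ⟨z, hzx, hzy, -⟩ := exists_ne_three (by omega) x y y
  have hsol : Group.IsSolvable A := by
    refine hM.transport (Equiv.refl X) A hp
      (Perm.isThreeCycle_swap_mul_swap_same hzx.symm hxy hzy) fun h => ?_
    have := h x
    simp only [Perm.mul_apply, swap_apply_left, swap_apply_of_ne_of_ne hxy.symm hzy.symm] at this
    exact hy (this.2 hx)
  refine card_le_four_of_hom A Perm.ofSubtype Perm.ofSubtype_injective fun π x => ?_
  by_cases hpx : p x
  · rw [Perm.ofSubtype_apply_of_mem π hpx]
    exact iff_of_true (π _).2 hpx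
  · rw [Perm.ofSubtype_apply_of_not_mem π hpx]

theorem fits_cut {n : ℕ} {M : Subgroup (Perm (Fin n))} (p : Fin n → Prop) [DecidablePred p]
    (hp : ∀ σ ∈ M, ∀ x, p (σ x) ↔ p x) {k : ℕ} (hk : Nat.card {x // p x} = k) :
    Fits M (Kind.cut k).rel := by
  have hkn : k ≤ n := by
    rw [← hk, Nat.card_eq_fintype_card]
    simpa using Fintype.card_subtype_le p
  have hc : Fintype.card {x // p x} = Fintype.card {x : Fin n // (x : ℕ) < k} := by
    rw [← Nat.card_eq_fintype_card, hk, Fintype.card_subtype]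
    rw [Fin.card_filter_val_lt]
    omega
  let e := Fintype.equivOfCardEq hc
  have hτ : ∀ x, ((e.extendSubtype x : Fin n) : ℕ) < k ↔ p x := fun x =>
    ⟨fun h => by_contra fun hx => e.extendSubtype_not_mem x hx h, e.extendSubtype_mem x⟩
  refine ⟨e.extendSubtype, fun σ hσ x y z => ?_⟩
  have key : ∀ x, ((e.extendSubtype (σ (e.extendSubtype⁻¹ x)) : Fin n) : ℕ) < k ↔ (x : ℕ) < k := by
    intro x
    rw [hτ, hp σ hσ, ← hτ]
    simp
  simp only [Kind.rel, Perm.mul_apply, key]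

/-- The intransitive case. A set of half the points is also a block system with two blocks, which is
why `cut 3` in degree `6` and `cut 4` in degree `8` do not appear in `kinds`. -/
theorem fits_intransitive {n : ℕ} (hn : 5 ≤ n) {M : Subgroup (Perm (Fin n))} (hM : SolMax M)
    (h : ¬ MulAction.IsPretransitive M (Fin n)) : ∃ t ∈ kinds n, Fits M t.rel := by
  classical
  have hn' : 5 ≤ Fintype.card (Fin n) := by simpa using hn
  obtain ⟨x, y, hxy⟩ : ∃ x y : Fin n, y ∉ MulAction.orbit M x := by
    by_contra! h2
    exact h ⟨fun x y => h2 x y⟩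
  let p : Fin n → Prop := fun z => z ∈ MulAction.orbit M x
  have hp : ∀ σ ∈ M, ∀ z, p (σ z) ↔ p z := by
    intro σ hσ z
    have : σ z = (⟨σ, hσ⟩ : M) • z := rfl
    simp only [p, this, ← MulAction.orbit_eq_iff, MulAction.orbit_smul]
  have hp' : ∀ σ ∈ M, ∀ z, ¬ p (σ z) ↔ ¬ p z := fun σ hσ z => not_congr (hp σ hσ z)
  have hx : p x := MulAction.mem_orbit_self x
  have h1 := hM.card_le_four_of_invariant hn' p hp hx hxy
  have h2 := hM.card_le_four_of_invariant hn' (fun z => ¬ p z) hp' hxy (not_not.2 hx)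
  have hsum : Nat.card {z // p z} + Nat.card {z // ¬ p z} = n := by
    have := Fintype.card_subtype_compl p
    have h3 := Fintype.card_subtype_le p
    rw [Nat.card_eq_fintype_card, Nat.card_eq_fintype_card]
    simp only [Fintype.card_fin] at this h3
    omega
  have hpos : 0 < Nat.card {z // p z} := Nat.card_pos_iff.2 ⟨⟨⟨x, hx⟩⟩, inferInstance⟩
  have hpos' : 0 < Nat.card {z // ¬ p z} := Nat.card_pos_iff.2 ⟨⟨⟨y, hxy⟩⟩, inferInstance⟩
  have f1 := fits_cut p hp rfl
  have f2 := fits_cut (fun z => ¬ p z) hp' rfl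
  -- the smaller of the two invariant sets
  obtain ⟨k, hk0, hk1, hk2, hk3⟩ : ∃ k, 0 < k ∧ 2 * k ≤ n ∧ n ≤ k + 4 ∧ Fits M (Kind.cut k).rel := by
    rcases le_total (Nat.card {z // p z}) (Nat.card {z // ¬ p z}) with h | h
    · exact ⟨_, hpos, by omega, by omega, f1⟩
    · exact ⟨_, hpos', by omega, by omega, f2⟩
  have blk_of_cut : n = 2 * k → Fits M (Kind.blk k).rel := by
    intro hnk
    obtain ⟨τ, hτ⟩ := hk3
    refine ⟨τ, fun σ hσ x y z => ?_⟩
    have key : ∀ u v w : Fin n, (Kind.blk k).rel u v w = (Kind.cut k).rel u v w := by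
      intro u v w
      have hd : ∀ u : Fin n, (u : ℕ) / k = if (u : ℕ) < k then 0 else 1 := by
        intro u
        split_ifs with hu
        · exact Nat.div_eq_of_lt hu
        · exact Nat.div_eq_of_lt_le (by omega) (by omega)
      simp only [Kind.rel, hd]
      split_ifs <;> simp [*]
    rw [key, key]
    exact hτ σ hσ x y z
  have hk4 : k ≤ 4 := by omega
  interval_cases k
  · obtain rfl : n = 5 := by omega
    exact ⟨_, by simp [kinds], hk3⟩
  · obtain rfl | rfl : n = 5 ∨ n = 6 := by omega
    · exact ⟨_, by simp [kinds], hk3⟩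
    · exact ⟨_, by simp [kinds], hk3⟩
  · obtain rfl | rfl : n = 6 ∨ n = 7 := by omega
    · exact ⟨_, by simp [kinds], blk_of_cut rfl⟩
    · exact ⟨_, by simp [kinds], hk3⟩
  · obtain rfl : n = 8 := by omega
    exact ⟨_, by simp [kinds], blk_of_cut rfl⟩

/-- For an invariant system of `b` blocks of size `a`, both symmetric groups of degrees `a` and `b`
embed in the stabiliser of the system. -/
theorem SolMax.blocks_le_four {X : Type*} [Fintype X] [DecidableEq X] {M : Subgroup (Perm X)}
    (hM : SolMax M) {a b : ℕ} (ha : 2 ≤ a) (hb : 2 ≤ b) (e : X ≃ Fin b × Fin a)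
    (he : ∀ σ ∈ M, ∀ x y, (e x).1 = (e y).1 → (e (σ x)).1 = (e (σ y)).1) : a ≤ 4 ∧ b ≤ 4 := by
  let A : Subgroup (Perm (Fin b × Fin a)) :=
    { carrier := {σ | ∀ x y, (σ x).1 = (σ y).1 ↔ x.1 = y.1}
      one_mem' := by simp
      mul_mem' := by
        intro s t hs ht x y
        simp only [Set.mem_ofPred_eq, Perm.coe_mul, Function.comp_apply] at *
        rw [hs, ht]
      inv_mem' := by
        intro s hs x y
        simpa using (hs (s⁻¹ x) (s⁻¹ y)).symm }
  have : Group.IsSolvable A := by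
    let x0 : Fin b × Fin a := (⟨0, by omega⟩, ⟨0, by omega⟩)
    let x1 : Fin b × Fin a := (⟨0, by omega⟩, ⟨1, by omega⟩)
    let x2 : Fin b × Fin a := (⟨1, by omega⟩, ⟨0, by omega⟩)
    let x3 : Fin b × Fin a := (⟨1, by omega⟩, ⟨1, by omega⟩)
    -- a 3-cycle that fixes `x1` and takes `x0`, in the block of `x1`, to another block
    refine hM.transport e A (fun σ hσ x y => ?_) (c := swap x0 x3 * swap x0 x2)
      (Perm.isThreeCycle_swap_mul_swap_same (by simp [x0, x3]) (by simp [x0, x2])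
        (by simp [x2, x3])) fun h => ?_
    · have hi := he σ⁻¹ (inv_mem hσ) (σ (e.symm x)) (σ (e.symm y))
      have hd := he σ hσ (e.symm x) (e.symm y)
      simp only [Perm.inv_def, symm_apply_apply, apply_symm_apply] at hi hd
      simp only [permCongr_apply]
      exact ⟨fun h => by simpa using hi h, hd⟩
    · have h1 := (h x0 x1).2 rfl
      have h2 : (swap x0 x3 * swap x0 x2) x0 = x2 := by
        rw [Perm.mul_apply, swap_apply_left, swap_apply_of_ne_of_ne] <;> simp [x0, x2, x3]
      have h3 : (swap x0 x3 * swap x0 x2) x1 = x1 := by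
        have h4 : swap x0 x2 x1 = x1 :=
          swap_apply_of_ne_of_ne (by simp [x0, x1]) (by simp [x1, x2])
        have h5 : swap x0 x3 x1 = x1 :=
          swap_apply_of_ne_of_ne (by simp [x0, x1]) (by simp [x1, x3])
        rw [Perm.mul_apply, h4, h5]
      rw [h2, h3] at h1
      simp [x1, x2] at h1
  constructor
  · have := card_le_four_of_hom A (F := Fin a)
      { toFun := fun π => prodCongr (Equiv.refl _) π
        map_one' := by ext x <;> rfl
        map_mul' := fun π ρ => by ext x <;> rfl }
      (fun π ρ h => by
        ext i
        have := congrArg (fun q : Perm (Fin b × Fin a) => (q (⟨0, by omega⟩, i)).2) h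
        exact congrArg Fin.val this)
      (fun π x y => Iff.rfl)
    simpa using this
  · have := card_le_four_of_hom A (F := Fin b)
      { toFun := fun π => prodCongr π (Equiv.refl _)
        map_one' := by ext x <;> rfl
        map_mul' := fun π ρ => by ext x <;> rfl }
      (fun π ρ h => by
        ext i
        have := congrArg (fun q : Perm (Fin b × Fin a) => (q (i, ⟨0, by omega⟩)).1) h
        exact congrArg Fin.val this)
      (fun π x y => π.injective.eq_iff)
    simpa using this

/-! ### Imprimitive groups -/

theorem fits_blk {b a : ℕ} (ha : 2 ≤ a) {M : Subgroup (Perm (Fin (b * a)))}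
    (e : Fin (b * a) ≃ Fin b × Fin a)
    (he : ∀ σ ∈ M, ∀ x y, (e x).1 = (e y).1 → (e (σ x)).1 = (e (σ y)).1) :
    Fits M (Kind.blk a).rel := by
  have hdiv : ∀ q : Fin b × Fin a, ((finProdFinEquiv q : Fin (b * a)) : ℕ) / a = q.1 := by
    intro q
    rw [finProdFinEquiv_apply_val, Nat.add_mul_div_left _ _ (by omega), Nat.div_eq_of_lt q.2.2,
      zero_add]
  refine ⟨e.trans finProdFinEquiv, fun σ hσ x y z => ?_⟩
  let τ : Perm (Fin (b * a)) := e.trans finProdFinEquiv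
  have hτ : ∀ x, ((τ x : Fin (b * a)) : ℕ) / a = (e x).1 := fun x => hdiv (e x)
  change (((τ (σ (τ⁻¹ x)) : Fin (b * a)) : ℕ) / a == ((τ (σ (τ⁻¹ y)) : Fin (b * a)) : ℕ) / a) =
    ((x : ℕ) / a == (y : ℕ) / a)
  have hx : ∀ x : Fin (b * a), (x : ℕ) / a = (e (τ⁻¹ x)).1 := fun x => by
    rw [← hτ, Perm.inv_def, apply_symm_apply]
  rw [hτ, hτ, hx x, hx y, Bool.eq_iff_iff, beq_iff_eq, beq_iff_eq, Fin.val_inj, Fin.val_inj]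
  refine ⟨fun h => ?_, he σ hσ _ _⟩
  simpa using he σ⁻¹ (inv_mem hσ) _ _ h

theorem fits_of_blocks {n : ℕ} (hn : 5 ≤ n) {M : Subgroup (Perm (Fin n))} (hM : SolMax M)
    {a b : ℕ} (ha : 2 ≤ a) (hb : 2 ≤ b) (e : Fin n ≃ Fin b × Fin a)
    (he : ∀ σ ∈ M, ∀ x y, (e x).1 = (e y).1 → (e (σ x)).1 = (e (σ y)).1) :
    ∃ t ∈ kinds n, Fits M t.rel := by
  obtain ⟨ha4, hb4⟩ := hM.blocks_le_four ha hb e he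
  obtain rfl : n = b * a := by
    have := Fintype.card_congr e
    rwa [Fintype.card_fin, Fintype.card_prod, Fintype.card_fin, Fintype.card_fin] at this
  refine ⟨_, ?_, fits_blk ha e he⟩
  clear he e hM M
  interval_cases a <;> interval_cases b <;> first | omega | simp [kinds]

open scoped Pointwise in
/-- The imprimitive case: a nontrivial block and its translates form an invariant block system. -/
theorem fits_imprimitive {n : ℕ} (hn : 5 ≤ n) {M : Subgroup (Perm (Fin n))} (hM : SolMax M)
    [MulAction.IsPretransitive M (Fin n)] (h : ¬ MulAction.IsPreprimitive M (Fin n)) :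
    ∃ t ∈ kinds n, Fits M t.rel := by
  classical
  obtain ⟨B, hB, hBs, hBu⟩ : ∃ B : Set (Fin n), MulAction.IsBlock M B ∧ ¬ B.Subsingleton ∧
      B ≠ Set.univ := by
    by_contra! h2
    refine h ⟨fun {B} hB => ?_⟩
    by_cases hs : B.Subsingleton
    · exact Or.inl hs
    · exact Or.inr (h2 B hB (Set.not_subsingleton_iff.1 hs))
  obtain ⟨b₀, hb₀, b₁, hb₁, hne⟩ := Set.not_subsingleton_iff.1 hBs
  choose g hg using fun x => MulAction.exists_smul_eq M b₀ x
  let f : Fin n → Set (Fin n) := fun x => g x • B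
  have heq : ∀ (m m' : M) (x : Fin n), x ∈ m • B → x ∈ m' • B → m • B = m' • B := by
    intro m m' x h1 h2
    by_contra h3
    exact Set.disjoint_left.1 (hB h3) h1 h2
  have hself : ∀ x, x ∈ f x := fun x => ⟨b₀, hb₀, hg x⟩
  have hfm : ∀ (m : M) x, f (m • x) = m • f x := by
    intro m x
    have h1 : m • x ∈ (m * g x) • B := ⟨b₀, hb₀, by
      change (m * g x) • b₀ = m • x
      rw [mul_smul, hg]⟩
    exact (heq _ _ _ (hself (m • x)) h1).trans (mul_smul m (g x) B)
  have hfib : ∀ x y, f y = f x ↔ y ∈ f x := fun x y =>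
    ⟨fun h => h ▸ hself y, fun h => heq _ _ _ (hself y) h⟩
  let Q := Set.range f
  let F : Fin n → Q := Set.rangeFactorization f
  have hF : ∀ x y, F x = F y ↔ f x = f y := fun x y => Subtype.ext_iff
  let a := Nat.card B
  let b := Nat.card Q
  have hcard : ∀ q : Q, Nat.card {x // F x = q} = a := by
    rintro ⟨_, x, rfl⟩
    have h1 : {y | F y = F x} = f x := by
      ext y
      rw [← hfib, ← hF]
      rfl
    change Nat.card ({y | F y = F x} : Set _) = a
    rw [h1, Nat.card_coe_set_eq, Set.ncard_smul_set, ← Nat.card_coe_set_eq]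
  have hE : ∀ q : Q, Nonempty ({x // F x = q} ≃ Fin a) := fun q =>
    ⟨Finite.equivFinOfCardEq (hcard q)⟩
  let E := fun q => (hE q).some
  let E' : Q ≃ Fin b := Finite.equivFin Q
  let e : Fin n ≃ Fin b × Fin a := (Equiv.sigmaFiberEquiv F).symm.trans
    (((Equiv.sigmaCongrRight E).trans (Equiv.sigmaEquivProd _ _)).trans
      (Equiv.prodCongr E' (Equiv.refl _)))
  have he1 : ∀ x, (e x).1 = E' (F x) := fun x => rfl
  have ha : 2 ≤ a := by
    have : Nontrivial B := ⟨⟨b₀, hb₀⟩, ⟨b₁, hb₁⟩, by simpa using hne⟩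
    exact Finite.one_lt_card
  have hb : 2 ≤ b := by
    obtain ⟨x, hx⟩ := (Set.ne_univ_iff_exists_notMem B).1 hBu
    have : Nontrivial Q := ⟨F x, F b₀, fun h => hx ?_⟩
    · exact Finite.one_lt_card
    · rw [hF, hfib] at h
      have h1 := heq (g b₀) 1 b₀ (hself b₀) (by simpa using hb₀)
      rw [one_smul] at h1
      exact h1 ▸ h
  have he : ∀ σ ∈ M, ∀ x y, (e x).1 = (e y).1 → (e (σ x)).1 = (e (σ y)).1 := by
    intro σ hσ x y hxy
    rw [he1, he1, E'.injective.eq_iff, hF] at hxy ⊢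
    have h1 := hfm ⟨σ, hσ⟩ x
    rw [hxy, ← hfm] at h1
    exact h1
  exact fits_of_blocks hn hM ha hb e he

/-! ### Primitive soluble groups are affine -/

theorem FitsAff.congr {X V W : Type*} [AddCommGroup V] [AddCommGroup W] {M : Subgroup (Perm X)}
    (h : FitsAff V M) (f : V ≃+ W) : FitsAff W M := by
  obtain ⟨e, he⟩ := h
  refine ⟨e.trans f.toEquiv, fun σ hσ x y z => ?_⟩
  have := he σ hσ (f.symm x) (f.symm y) (f.symm z)
  simp only [permCongr_apply] at this
  have h2 := congrArg f this
  simpa [permCongr_apply] using h2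

/-- A nontrivial finite soluble group has a nontrivial abelian normal subgroup of exponent `p`: the
elements of order dividing `p` in the last nontrivial term of the derived series. -/
theorem exists_abelian_normal {G : Type*} [Group G] [Finite G] [Group.IsSolvable G] [Nontrivial G] :
    ∃ (p : ℕ) (N : Subgroup G), p.Prime ∧ N.Normal ∧ N ≠ ⊥ ∧ (∀ x ∈ N, x ^ p = 1) ∧
      ∀ x ∈ N, ∀ y ∈ N, x * y = y * x := by
  classical
  have hs : ∃ k, derivedSeries G k = ⊥ := Group.IsSolvable.solvable
  obtain ⟨j, hj, hj1⟩ : ∃ j, derivedSeries G j ≠ ⊥ ∧ derivedSeries G (j + 1) = ⊥ := by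
    have h0 : Nat.find hs ≠ 0 := fun h => by
      have := Nat.find_spec hs
      rw [h, derivedSeries_zero] at this
      exact top_ne_bot this
    obtain ⟨j, hj⟩ := Nat.exists_eq_succ_of_ne_zero h0
    exact ⟨j, Nat.find_min hs (by omega), by have := Nat.find_spec hs; rwa [hj] at this⟩
  have hcomm : ∀ x ∈ derivedSeries G j, ∀ y ∈ derivedSeries G j, x * y = y * x := by
    intro x hx y hy
    have : ⁅x, y⁆ ∈ derivedSeries G (j + 1) := Subgroup.commutator_mem_commutator hx hy
    rw [hj1, Subgroup.mem_bot, commutatorElement_eq_one_iff_mul_comm] at this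
    exact this
  have hnt : Nontrivial (derivedSeries G j) := (Subgroup.nontrivial_iff_ne_bot _).2 hj
  obtain ⟨p, hp, hpd⟩ := Nat.exists_prime_and_dvd
    (Finite.one_lt_card (α := derivedSeries G j)).ne'
  have : Fact p.Prime := ⟨hp⟩
  obtain ⟨x, hx⟩ := exists_prime_orderOf_dvd_card' p hpd
  let N : Subgroup G :=
    { carrier := {x | x ∈ derivedSeries G j ∧ x ^ p = 1}
      one_mem' := ⟨one_mem _, one_pow _⟩
      mul_mem' := fun {a b} ha hb => ⟨mul_mem ha.1 hb.1, by
        rw [(show Commute a b from hcomm a ha.1 b hb.1).mul_pow, ha.2, hb.2, one_mul]⟩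
      inv_mem' := fun {a} ha => ⟨inv_mem ha.1, by rw [inv_pow, ha.2, inv_one]⟩ }
  have hnorm : (derivedSeries G j).Normal := inferInstance
  refine ⟨p, N, hp, ⟨fun a ha g => ⟨hnorm.conj_mem a ha.1 g, by rw [conj_pow, ha.2]; group⟩⟩,
    fun hN => ?_, fun x hx => hx.2, fun x hx y hy => hcomm x hx.1 y hy.1⟩
  have h1 : (x : G) ∈ N := ⟨x.2, by
    have := pow_orderOf_eq_one x
    rw [hx] at this
    exact_mod_cast congrArg Subtype.val this⟩
  rw [hN, Subgroup.mem_bot] at h1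
  have h2 : x = 1 := Subtype.ext h1
  rw [h2, orderOf_one] at hx
  exact hp.one_lt.ne hx

theorem exists_coordinates_of_module (p : ℕ) [Fact p.Prime] (V : Type*) [AddCommGroup V] [Finite V]
    [Module (ZMod p) V] : ∃ d : ℕ, Nonempty (V ≃+ (Fin d → ZMod p)) :=
  ⟨_, ⟨(Module.finBasis (ZMod p) V).equivFun.toAddEquiv⟩⟩

theorem exists_coordinates (p : ℕ) [Fact p.Prime] {V : Type*} [AddCommGroup V] [Finite V]
    (h : ∀ x : V, p • x = 0) : ∃ d : ℕ, Nonempty (V ≃+ (Fin d → ZMod p)) :=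
  letI : Module (ZMod p) V := AddCommGroup.zmodModule h
  exists_coordinates_of_module p V

/-- A soluble primitive group acts by affine maps of a vector space over a prime field: an elementary
abelian normal subgroup is regular, and the group acts on it by conjugation and translation. -/
theorem exists_fitsAff {X : Type*} [Finite X] [Nontrivial X] (M : Subgroup (Perm X))
    [Group.IsSolvable M] [MulAction.IsPreprimitive M X] :
    ∃ p d : ℕ, p.Prime ∧ FitsAff (Fin d → ZMod p) M := by
  classical
  have : Nontrivial M := by
    obtain ⟨x, y, hxy⟩ := exists_pair_ne X
    obtain ⟨m, hm⟩ := MulAction.exists_smul_eq M x y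
    refine ⟨m, 1, fun h => hxy ?_⟩
    rw [← hm, h, one_smul]
  obtain ⟨p, N, hp, hN, hN1, hNp, hNc⟩ := exists_abelian_normal (G := M)
  have hfp : Fact p.Prime := ⟨hp⟩
  obtain ⟨x₀, -⟩ := exists_pair_ne X
  have htr : MulAction.IsPretransitive N X := by
    refine MulAction.IsQuasiPreprimitive.isPretransitive_of_normal (G := M) fun h => hN1 ?_
    rw [eq_bot_iff]
    intro m hm
    rw [Subgroup.mem_bot]
    ext x
    have : x ∈ MulAction.fixedPoints N X := by rw [h]; trivial
    exact this ⟨m, hm⟩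
  let _ : CommGroup N := { (inferInstance : Group N) with
    mul_comm := fun a b => Subtype.ext (hNc a a.2 b b.2) }
  have hbij : Function.Bijective fun a : Additive N => a.toMul • x₀ := by
    constructor
    · intro a b hab
      have h1 : a.toMul = b.toMul := by
        refine Subtype.ext (Subtype.ext (Perm.ext fun x => ?_))
        obtain ⟨u, rfl⟩ := MulAction.exists_smul_eq N x₀ x
        change a.toMul • u • x₀ = b.toMul • u • x₀
        rw [smul_comm, smul_comm b.toMul]
        exact congrArg (u • ·) hab
      exact h1
    · intro x
      obtain ⟨u, hu⟩ := MulAction.exists_smul_eq N x₀ x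
      exact ⟨Additive.ofMul u, hu⟩
  let e : Additive N ≃ X := Equiv.ofBijective _ hbij
  have hAff : FitsAff (Additive N) M := by
    refine ⟨e.symm, fun σ hσ => ?_⟩
    let φ : Additive N →+ Additive N :=
      MonoidHom.toAdditive (MulAut.conjNormal (⟨σ, hσ⟩ : M) : MulAut N).toMonoidHom
    let u : Additive N := e.symm (σ x₀)
    have key : ∀ v, e.symm.permCongr σ v = φ v + u := by
      intro v
      rw [permCongr_apply, symm_symm, symm_apply_eq]
      have hu : e u = σ x₀ := e.apply_symm_apply _
      have : e (φ v + u) = (φ v).toMul • e u := rfl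
      rw [this, hu]
      change σ (v.toMul • x₀) = ((MulAut.conjNormal (⟨σ, hσ⟩ : M) v.toMul : N) : M) • σ x₀
      rw [MulAut.conjNormal_apply]
      change σ ((v.toMul : M) • x₀) = (σ * ((v.toMul : M) : Perm X) * σ⁻¹) (σ x₀)
      simp
      rfl
    intro x y z
    rw [key, key, key, key, map_sub, map_add]
    abel
  obtain ⟨d, ⟨f⟩⟩ := exists_coordinates p (V := Additive N) fun x => by
    have : x.toMul ^ p = 1 := Subtype.ext (hNp _ x.toMul.2)
    exact this
  exact ⟨p, d, hp, hAff.congr f⟩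

/-! ### Solubility of affine groups -/

/-- A perfect subgroup of a soluble group is trivial. -/
theorem eq_bot_of_le_commutator {G : Type*} [Group G] {A K : Subgroup G} [Group.IsSolvable A]
    (hK : K ≤ A) (hp : K ≤ ⁅K, K⁆) : K = ⊥ := by
  by_contra hne
  have hmap : (K.subgroupOf A).map A.subtype = K := by
    rw [Subgroup.subgroupOf_map_subtype, inf_eq_left.2 hK]
  have hne' : K.subgroupOf A ≠ ⊥ := fun h => hne (by rw [← hmap, h, Subgroup.map_bot])
  refine (Group.IsSolvable.commutator_lt_of_ne_bot hne').not_ge ?_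
  rw [← Subgroup.map_le_map_iff_of_injective A.subtype_injective, Subgroup.map_commutator, hmap]
  exact hp

theorem exists_threeCycle_of_fixed {V : Type*} [Fintype V] [DecidableEq V] (S : Finset V) {w : V}
    (hw : w ∉ S) (hS : S.card + 3 ≤ Fintype.card V) :
    ∃ c : Perm V, c.IsThreeCycle ∧ c w ≠ w ∧ ∀ s ∈ S, c s = s := by
  have h1 : 1 < (insert w S)ᶜ.card := by
    rw [Finset.card_compl, Finset.card_insert_of_notMem hw]
    omega
  obtain ⟨u, hu, v, hv, huv⟩ := Finset.one_lt_card.1 h1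
  simp only [Finset.mem_compl, Finset.mem_insert, not_or] at hu hv
  refine ⟨swap w u * swap w v, Perm.isThreeCycle_swap_mul_swap_same (Ne.symm hu.1) (Ne.symm hv.1) huv, ?_,
    fun s hs => ?_⟩
  · rw [Perm.mul_apply, swap_apply_left, swap_apply_of_ne_of_ne hv.1 huv.symm]
    exact hv.1
  · have hsw : s ≠ w := fun h => hw (h ▸ hs)
    have hsv : s ≠ v := fun h => hv.2 (h ▸ hs)
    have hsu : s ≠ u := fun h => hu.2 (h ▸ hs)
    rw [Perm.mul_apply, swap_apply_of_ne_of_ne hsw hsv, swap_apply_of_ne_of_ne hsw hsu]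

/-- A 3-cycle moving `x + y - z` and fixing `x`, `y`, `z` is not affine. In exponent two, three
distinct points are needed for this, hence the hypothesis of at least six points. -/
theorem exists_threeCycle_notMem_affPerm {V : Type*} [AddCommGroup V] [Fintype V] [DecidableEq V]
    (h5 : 5 ≤ Fintype.card V) (h : (∃ v : V, v + v ≠ 0) ∨ 6 ≤ Fintype.card V) :
    ∃ c : Perm V, c.IsThreeCycle ∧ c ∉ affPerm V := by
  obtain ⟨x, y, z, S, hx, hy, hz, hw, hS⟩ : ∃ (x y z : V) (S : Finset V), x ∈ S ∧ y ∈ S ∧ z ∈ S ∧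
      x + y - z ∉ S ∧ S.card + 3 ≤ Fintype.card V := by
    by_cases hv : ∃ v : V, v + v ≠ 0
    · obtain ⟨v, hv⟩ := hv
      refine ⟨0, 0, v, {0, v}, by simp, by simp, by simp, ?_, ?_⟩
      · simp only [Finset.mem_insert, Finset.mem_singleton, not_or]
        refine ⟨fun h => hv ?_, fun h => hv ?_⟩
        · have : v = 0 := by simpa using h
          simp [this]
        · nth_rewrite 1 [← h]
          abel
      · have := Finset.card_le_two (a := (0 : V)) (b := v)
        omega
    · have h6 := h.resolve_left hv
      push Not at hv
      obtain ⟨x, hx, -⟩ := exists_ne_three (by omega) (0 : V) 0 0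
      obtain ⟨y, hy, hyx, -⟩ := exists_ne_three (by omega) (0 : V) x x
      refine ⟨x, y, 0, {x, y, 0}, by simp, by simp, by simp, ?_, ?_⟩
      · simp only [Finset.mem_insert, Finset.mem_singleton, not_or, sub_zero]
        refine ⟨by simpa using hy, by simpa using hx, fun h => hyx ?_⟩
        have h2 := hv x
        exact (add_left_cancel (h2.trans h.symm)).symm
      · have := Finset.card_le_three (a := x) (b := y) (c := (0 : V))
        omega
  obtain ⟨c, hc, hcw, hcS⟩ := exists_threeCycle_of_fixed S hw hS
  refine ⟨c, hc, fun h => hcw ?_⟩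
  rw [h x y z, hcS x hx, hcS y hy, hcS z hz]

section Transvections

variable {F : Type*} [Field F] {d : ℕ}

/-- The transvection `x ↦ x + c x_j e_i` of `F ^ d`, as a permutation. -/
def transv (i j : Fin d) (hij : i ≠ j) (c : F) : Perm (Fin d → F) where
  toFun x := x + Pi.single i (c * x j)
  invFun x := x - Pi.single i (c * x j)
  left_inv x := by simp [Pi.single_eq_of_ne hij.symm]
  right_inv x := by simp [Pi.single_eq_of_ne hij.symm]

theorem transv_apply {i j : Fin d} (hij : i ≠ j) (c : F) (x : Fin d → F) (m : Fin d) :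
    transv i j hij c x m = x m + if m = i then c * x j else 0 := by
  simp [transv, Pi.single_apply]

theorem transv_mem_affPerm {i j : Fin d} (hij : i ≠ j) (c : F) :
    transv i j hij c ∈ affPerm (Fin d → F) := by
  intro x y z
  ext m
  simp only [transv_apply, Pi.add_apply, Pi.sub_apply]
  split_ifs <;> ring

/-- The group generated by the transvections. -/
def transvGroup (F : Type*) [Field F] (d : ℕ) : Subgroup (Perm (Fin d → F)) :=
  Subgroup.closure {t | ∃ (i j : Fin d) (hij : i ≠ j) (c : F), t = transv i j hij c}

theorem transv_mem {i j : Fin d} (hij : i ≠ j) (c : F) :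
    transv i j hij c ∈ transvGroup F d :=
  Subgroup.subset_closure ⟨i, j, hij, c, rfl⟩

/-- If every transvection is a commutator of elements of `transvGroup`, that group is perfect, which
is incompatible with solubility of the affine group. -/
theorem transvGroup_not_perfect [Group.IsSolvable (affPerm (Fin d → F))] {i j : Fin d} (hij : i ≠ j) :
    ¬ ∀ (i j : Fin d) (hij : i ≠ j) (c : F),
      ∃ a ∈ transvGroup F d, ∃ b ∈ transvGroup F d, a * b = transv i j hij c * (b * a) := by
  intro h
  have hle : transvGroup F d ≤ affPerm (Fin d → F) := by
    refine (Subgroup.closure_le _).2 ?_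
    rintro _ ⟨i, j, hij, c, rfl⟩
    exact transv_mem_affPerm hij c
  have hbot := eq_bot_of_le_commutator hle <| (Subgroup.closure_le _).2 <| by
    rintro _ ⟨i, j, hij, c, rfl⟩
    obtain ⟨a, ha, b, hb, hab⟩ := h i j hij c
    have : transv i j hij c = ⁅a, b⁆ := by
      rw [commutatorElement_def, hab]; group
    rw [this]
    exact Subgroup.commutator_mem_commutator ha hb
  have h1 := transv_mem hij (1 : F)
  rw [hbot, Subgroup.mem_bot] at h1
  have h2 := congrFun (congrArg (fun σ : Perm (Fin d → F) => σ (Pi.single j 1)) h1) i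
  simp [transv_apply, Pi.single_eq_of_ne hij] at h2

/-- In dimension at least three, `E_ij(c) = [E_ik(c), E_kj(1)]`. -/
theorem not_solvable_of_three_le (hd : 3 ≤ d) : ¬ Group.IsSolvable (affPerm (Fin d → F)) := by
  intro hs
  have h01 : (⟨0, by omega⟩ : Fin d) ≠ ⟨1, by omega⟩ := by simp
  refine transvGroup_not_perfect (F := F) h01 fun i j hij c => ?_
  obtain ⟨k, hki, hkj, -⟩ : ∃ k : Fin d, k ≠ i ∧ k ≠ j ∧ k ≠ j := by
    have h : ({i, j} : Finset (Fin d)) ≠ Finset.univ := fun h' => by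
      have h3 : ({i, j} : Finset (Fin d)).card ≤ 2 := Finset.card_le_two
      rw [h', Finset.card_univ, Fintype.card_fin] at h3
      omega
    obtain ⟨k, hk⟩ : ∃ k, k ∉ ({i, j} : Finset (Fin d)) := by
      by_contra! h2
      exact h (Finset.eq_univ_iff_forall.2 h2)
    simp only [Finset.mem_insert, Finset.mem_singleton, not_or] at hk
    exact ⟨k, hk.1, hk.2, hk.2⟩
  refine ⟨_, transv_mem hki.symm c, _, transv_mem hkj 1, ?_⟩
  ext x m
  simp only [Perm.mul_apply, transv_apply, hkj.symm, hij.symm, if_true, if_false]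
  split_ifs with h1 h2
  · exact absurd (h2.symm.trans h1) hki.symm
  all_goals ring

/-- In dimension two and characteristic at least five, `E_ij(3c)` is the commutator of `diag(2, 1/2)`
and `E_ij(c)`. -/
theorem not_solvable_of_two_le (hd : 2 ≤ d) (h2 : (2 : F) ≠ 0) (h3 : (3 : F) ≠ 0) :
    ¬ Group.IsSolvable (affPerm (Fin d → F)) := by
  intro hs
  have h01 : (⟨0, by omega⟩ : Fin d) ≠ ⟨1, by omega⟩ := by simp
  refine transvGroup_not_perfect (F := F) h01 fun i j hij c => ?_
  obtain ⟨h, hh⟩ : ∃ h : F, 2 * h = 1 := ⟨2⁻¹, mul_inv_cancel₀ h2⟩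
  obtain ⟨c', hc'⟩ : ∃ c' : F, 3 * c' = c := ⟨3⁻¹ * c, by field_simp⟩
  -- the matrix `diag(2, 1/2)` in the coordinates `i`, `j`, as a product of transvections
  let D : Perm (Fin d → F) := transv i j hij 2 * transv j i hij.symm (-h) * transv i j hij 1 *
    transv j i hij.symm 1 * transv i j hij (-1)
  have hD : D ∈ transvGroup F d := mul_mem (mul_mem (mul_mem (mul_mem (transv_mem _ _)
    (transv_mem _ _)) (transv_mem _ _)) (transv_mem _ _)) (transv_mem _ _)
  have hDi : ∀ x, D x i = 2 * x i := fun x => by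
    simp only [D, Perm.mul_apply, transv_apply, hij, hij.symm, if_true, if_false]
    linear_combination (-2 * x i + x j) * hh
  have hDj : ∀ x, D x j = h * x j := fun x => by
    simp only [D, Perm.mul_apply, transv_apply, hij, hij.symm, if_true, if_false]
    linear_combination (-x i) * hh
  have hDm : ∀ x m, m ≠ i → m ≠ j → D x m = x m := fun x m h1 h2 => by
    simp only [D, Perm.mul_apply, transv_apply, h1, h2, if_false, add_zero]
  refine ⟨D, hD, _, transv_mem hij c', ?_⟩
  ext x m
  simp only [Perm.mul_apply]
  by_cases hi : m = i
  · subst hi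
    simp only [hDi, hDj, transv_apply, hij.symm, if_true, if_false]
    linear_combination (-2 * c' * x j) * hh + h * x j * hc'
  by_cases hj : m = j
  · subst hj
    simp only [hDj, transv_apply, hij.symm, if_false, add_zero]
  · simp only [hDm _ _ hi hj, transv_apply, hi, if_false, add_zero]

end Transvections

/-! ### Classification and regularity -/

/-- Affine permutations preserve and reflect the midpoint relation. -/
theorem affPerm_rel {V : Type*} [AddCommGroup V] {σ : Perm V} (h : σ ∈ affPerm V) (x y z : V) :
    σ x + σ y = σ z + σ z ↔ x + y = z + z := by
  rw [← sub_eq_iff_eq_add, ← h, σ.injective.eq_iff, sub_eq_iff_eq_add]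

theorem fits_of_fitsAff {n : ℕ} {V : Type*} [AddCommGroup V] {M : Subgroup (Perm (Fin n))}
    (h : FitsAff V M) (f : V ≃ Fin n) (R : ℕ → ℕ → ℕ → Bool)
    (hR : ∀ x y z, R (f x) (f y) (f z) = true ↔ x + y = z + z) : Fits M R := by
  obtain ⟨e, he⟩ := h
  refine ⟨e.trans f, fun σ hσ x y z => ?_⟩
  obtain ⟨x, rfl⟩ := f.surjective x
  obtain ⟨y, rfl⟩ := f.surjective y
  obtain ⟨z, rfl⟩ := f.surjective z
  have key : ∀ x, (e.trans f * σ * (e.trans f)⁻¹ : Perm (Fin n)) (f x) = f (e.permCongr σ x) := by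
    intro x
    change f (e (σ (e.symm (f.symm (f x))))) = _
    rw [f.symm_apply_apply, permCongr_apply]
  rw [key, key, key, Bool.eq_iff_iff, hR, hR]
  exact affPerm_rel (he σ hσ) x y z

theorem fits_aff {q : ℕ} {M : Subgroup (Perm (Fin (q + 1)))} (h : FitsAff (ZMod (q + 1)) M) :
    Fits M (Kind.aff (q + 1)).rel := by
  refine fits_of_fitsAff (V := Fin (q + 1)) h (Equiv.refl _) _ fun x y z => ?_
  simp only [Kind.rel, beq_iff_eq, Fin.ext_iff, Fin.val_add, Equiv.refl_apply]

theorem fits_aff9 {M : Subgroup (Perm (Fin 9))} (h : FitsAff (Fin 2 → ZMod 3) M) :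
    Fits M Kind.aff9.rel := by
  refine fits_of_fitsAff (V := Fin 2 → Fin 3) h
    ((finTwoArrowEquiv (Fin 3)).trans (finProdFinEquiv (m := 3) (n := 3))) _ fun x y z => ?_
  have h1 : ∀ x : Fin 2 → Fin 3, (((finTwoArrowEquiv (Fin 3)).trans
      (finProdFinEquiv (m := 3) (n := 3)) x : Fin 9) : ℕ) / 3 = x 0 := fun x => by
    change ((x 1 : ℕ) + 3 * (x 0 : ℕ)) / 3 = x 0
    omega
  have h2 : ∀ x : Fin 2 → Fin 3, (((finTwoArrowEquiv (Fin 3)).trans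
      (finProdFinEquiv (m := 3) (n := 3)) x : Fin 9) : ℕ) % 3 = x 1 := fun x => by
    change ((x 1 : ℕ) + 3 * (x 0 : ℕ)) % 3 = x 1
    omega
  simp only [Kind.rel, h1, h2, Bool.and_eq_true, beq_iff_eq, funext_iff, Fin.forall_fin_two,
    Pi.add_apply, Fin.ext_iff, Fin.val_add]

/-- The primitive case. Solubility of the affine group forces `n = p`, or `n = 9`. -/
theorem fits_primitive {n : ℕ} (hn : 5 ≤ n) {M : Subgroup (Perm (Fin n))} (hM : SolMax M)
    [Group.IsSolvable M] [MulAction.IsPreprimitive M (Fin n)] :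
    (∃ t ∈ kinds n, Fits M t.rel) ∨ (n.Prime ∧ 11 ≤ n ∧ FitsAff (ZMod n) M) := by
  have : Nontrivial (Fin n) := Fin.nontrivial_iff_two_le.2 (by omega)
  obtain ⟨p, d, hp, hAff⟩ := exists_fitsAff M
  have hfp : Fact p.Prime := ⟨hp⟩
  obtain ⟨e, he⟩ := id hAff
  have hcard : n = p ^ d := by simpa using Fintype.card_congr e
  have hd0 : d ≠ 0 := fun h => by rw [h, pow_zero] at hcard; omega
  have hsol : Group.IsSolvable (affPerm (Fin d → ZMod p)) := by
    have hc : Fintype.card (Fin d → ZMod p) = n := by simpa using (Fintype.card_congr e).symm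
    obtain ⟨c, hc3, hcA⟩ := exists_threeCycle_notMem_affPerm (V := Fin d → ZMod p) (by omega) <| by
      rcases eq_or_ne p 2 with rfl | hp2
      · right
        have h3 : 3 ≤ d := by
          by_contra h
          have := Nat.pow_le_pow_right (n := 2) (by norm_num) (show d ≤ 2 by omega)
          omega
        have := Nat.pow_le_pow_right (n := 2) (by norm_num) h3
        omega
      · left
        refine ⟨fun _ => 1, fun h => ?_⟩
        have h1 := congrFun h ⟨0, by omega⟩
        have h2 : ((2 : ℕ) : ZMod p) = 0 := by
          simpa [one_add_one_eq_two] using h1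
        rw [ZMod.natCast_eq_zero_iff] at h2
        exact hp2 ((Nat.prime_dvd_prime_iff_eq hp Nat.prime_two).1 h2)
    exact hM.transport e _ he hc3 hcA
  have hd3 : d < 3 := by
    by_contra h
    exact not_solvable_of_three_le (F := ZMod p) (not_lt.1 h) hsol
  obtain rfl | rfl : d = 1 ∨ d = 2 := by omega
  · rw [pow_one] at hcard
    subst hcard
    have hA : FitsAff (ZMod n) M := hAff.congr (LinearEquiv.funUnique (Fin 1) ℤ (ZMod n)).toAddEquiv
    by_cases h11 : 11 ≤ n
    · exact Or.inr ⟨hp, h11, hA⟩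
    · left
      obtain rfl | rfl : n = 5 ∨ n = 7 := by
        clear * - hn h11 hp
        interval_cases n <;> revert hp <;> norm_num
      · exact ⟨_, by simp [kinds], fits_aff hA⟩
      · exact ⟨_, by simp [kinds], fits_aff hA⟩
  · obtain rfl : p = 3 := by
      by_contra hp3
      have hp2 : p ≠ 2 := fun h => by rw [h] at hcard; omega
      refine not_solvable_of_two_le (F := ZMod p) le_rfl (fun h => ?_) (fun h => ?_) hsol
      · have h2 : ((2 : ℕ) : ZMod p) = 0 := by exact_mod_cast h
        rw [ZMod.natCast_eq_zero_iff] at h2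
        exact hp2 ((Nat.prime_dvd_prime_iff_eq hp Nat.prime_two).1 h2)
      · have h2 : ((3 : ℕ) : ZMod p) = 0 := by exact_mod_cast h
        rw [ZMod.natCast_eq_zero_iff] at h2
        exact hp3 ((Nat.prime_dvd_prime_iff_eq hp Nat.prime_three).1 h2)
    obtain rfl : n = 9 := by omega
    exact Or.inl ⟨_, by simp [kinds], fits_aff9 hAff⟩

/-- Soluble maximal subgroups of degree `n ≥ 5` preserve a structure from `kinds n`, unless they are
affine of prime degree at least `11`. -/
theorem SolMax.classification {n : ℕ} (hn : 5 ≤ n) {M : Subgroup (Perm (Fin n))} (hM : SolMax M)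
    [Group.IsSolvable M] :
    (∃ t ∈ kinds n, Fits M t.rel) ∨ (n.Prime ∧ 11 ≤ n ∧ FitsAff (ZMod n) M) := by
  by_cases h1 : MulAction.IsPretransitive M (Fin n)
  · by_cases h2 : MulAction.IsPreprimitive M (Fin n)
    · exact fits_primitive hn hM
    · exact Or.inl (fits_imprimitive hn hM h2)
  · exact Or.inl (fits_intransitive hn hM h1)

theorem kinds_of_prime {n : ℕ} (hp : n.Prime) (h : 11 ≤ n) : kinds n = [] := by
  unfold kinds
  split
  all_goals first | rfl | omega | (exfalso; revert hp; norm_num)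

/-- Regularity, with even conjugating elements, for subgroups of the symmetric group. -/
theorem exists_even {n : ℕ} (hn : 5 ≤ n) (M : Fin 5 → Subgroup (Perm (Fin n)))
    (hM : ∀ i, SolMax (M i)) (hs : ∀ i, Group.IsSolvable (M i)) :
    ∃ g : Fin 5 → Perm (Fin n), (∀ i, g i ∈ alternatingGroup (Fin n)) ∧
      ∀ σ, (∀ i, (g i)⁻¹ * σ * g i ∈ M i) → σ = 1 := by
  have hc := fun i => (hM i).classification hn
  by_cases hp : n.Prime ∧ 11 ≤ n
  · have : Fact n.Prime := ⟨hp.1⟩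
    refine exists_even_of_prime hp.2 M fun i => ?_
    rcases hc i with ⟨t, ht, -⟩ | h
    · rw [kinds_of_prime hp.1 hp.2] at ht
      simp at ht
    · exact h.2.2
  · have hc' := fun i => (hc i).resolve_right fun h => hp ⟨h.1, h.2.1⟩
    choose ts hts hf using hc'
    exact exists_even_of_kinds M ts hts hf

theorem SolMax.of_isCoatom {X : Type*} [Fintype X] [DecidableEq X] {H : Subgroup (Perm X)}
    (hs : Group.IsSolvable H) (hH : IsCoatom H) : SolMax H := by
  intro L hL hA
  rcases hH.le_iff.1 hL with rfl | rfl
  · exact absurd le_top hA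
  · exact hs

/-- A soluble maximal subgroup `H` of the alternating group has the property `SolMax` in the symmetric
group: an overgroup `L` not containing the alternating group meets it in `H`, and `L / H` has order
at most two. -/
theorem SolMax.map_subtype {X : Type*} [Fintype X] [DecidableEq X]
    {H : Subgroup (alternatingGroup X)} (hs : Group.IsSolvable H) (hH : IsCoatom H) :
    SolMax (H.map (alternatingGroup X).subtype) := by
  intro L hL hA
  have hle : H ≤ L.subgroupOf (alternatingGroup X) := Subgroup.map_le_iff_le_comap.1 hL
  have heq : L.subgroupOf (alternatingGroup X) = H := by
    rcases hH.le_iff.1 hle with h | h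
    · exact absurd (Subgroup.subgroupOf_eq_top.1 h) hA
    · exact h
  -- `L ∩ A_n = H` is the kernel of the sign on `L`
  let f : H →* L := ((alternatingGroup X).subtype.comp H.subtype).codRestrict L fun h =>
    hL ⟨h, h.2, rfl⟩
  refine Group.isSolvable_of_ker_le_range f (Perm.sign.comp L.subtype) fun σ hσ => ?_
  have h1 : (σ : Perm X) ∈ alternatingGroup X := hσ
  have h2 : (⟨σ, h1⟩ : alternatingGroup X) ∈ H := heq ▸ σ.2
  exact ⟨⟨_, h2⟩, rfl⟩

theorem mem_conjSub {G : Type*} [Group G] {g x : G} {H : Subgroup G} :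
    x ∈ conjSub g H ↔ g⁻¹ * x * g ∈ H := by
  constructor
  · rintro ⟨y, hy, rfl⟩
    have : g⁻¹ * (MulAut.conj g y) * g = y := by simp [mul_assoc]
    exact this.symm ▸ hy
  · exact fun h => ⟨_, h, by simp [mul_assoc]⟩

theorem soluble_maximal_five_tuples_are_regular (n : ℕ) (hn : 5 ≤ n) :
    -- G = Sₙ
    (∀ H : Fin 5 → Subgroup (Equiv.Perm (Fin n)),
        (∀ i, IsSolvable ↥(H i)) → (∀ i, IsCoatom (H i)) →
        IsRegularTuple H) ∧
    -- G = Aₙ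
    (∀ H : Fin 5 → Subgroup ↥(alternatingGroup (Fin n)),
        (∀ i, IsSolvable ↥(H i)) → (∀ i, IsCoatom (H i)) →
        IsRegularTuple H) := by
  refine ⟨fun H hs hH => ?_, fun H hs hH => ?_⟩
  · obtain ⟨g, -, hg⟩ := exists_even hn H (fun i => .of_isCoatom (hs i) (hH i)) hs
    refine ⟨g, (Subgroup.eq_bot_iff_forall _).2 fun σ hσ => hg σ fun i => ?_⟩
    exact mem_conjSub.1 (Subgroup.mem_iInf.1 hσ i)
  · obtain ⟨g, hgA, hg⟩ := exists_even hn (fun i => (H i).map (alternatingGroup (Fin n)).subtype)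
      (fun i => .map_subtype (hs i) (hH i))
      (fun i => have : Group.IsSolvable (H i) := hs i; Group.isSolvable_of_surjective
        ((alternatingGroup (Fin n)).subtype.subgroupMap_surjective (H i)))
    refine ⟨fun i => ⟨g i, hgA i⟩, (Subgroup.eq_bot_iff_forall _).2 fun σ hσ =>
      Subtype.ext (hg σ fun i => ?_)⟩
    exact ⟨_, mem_conjSub.1 (Subgroup.mem_iInf.1 hσ i), rfl⟩
end

section
/- Let n ≥ 17 and let G = S_n or G = A_n. If H and K are subgroups of G, each of which is solvable and a maximal subgroup of G, then there exists g ∈ G with H ∩ g K g^{-1} = 1; that is, every pair of solvable maximal subgroups of G is regular. -/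
/-! ### Nonsolvability of special linear groups -/

section LinearPart
open Matrix Matrix.SpecialLinearGroup
open scoped commutatorElement

/-- The Steinberg relation: in rank at least three, transvections are commutators of transvections.
It keeps all transvections in every term of the derived series. -/
theorem transvection_commutator {d : ℕ} {F : Type*} [Field F] {i j k : Fin d}
    (hij : i ≠ j) (hik : i ≠ k) (hkj : k ≠ j) (c : F) :
    (transvection hij c : SpecialLinearGroup (Fin d) F) =
      ⁅transvection hik c, transvection hkj (1 : F)⁆ := by
  rw [commutatorElement_def, transvection_inv, transvection_inv]
  apply Subtype.ext
  change (1 + single i j c : Matrix (Fin d) (Fin d) F) =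
    (1 + single i k c) * (1 + single k j 1) * (1 + single i k (-c)) * (1 + single k j (-1))
  simp only [mul_add, add_mul, one_mul, mul_one, single_mul_single_same,
    single_mul_single_of_ne _ _ _ _ hij.symm, single_mul_single_of_ne _ _ _ _ hik.symm,
    single_mul_single_of_ne _ _ _ _ hkj.symm, mul_neg, neg_mul, add_zero, ← single_neg]
  abel

theorem transvection_one_ne_one {d : ℕ} {F : Type*} [Field F] {i j : Fin d} (hij : i ≠ j) :
    (transvection hij 1 : SpecialLinearGroup (Fin d) F) ≠ 1 := by
  intro h
  have := congrArg (fun A : SpecialLinearGroup (Fin d) F => A.1 i j) h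
  simp [transvection_coe, hij] at this

theorem not_isSolvable_SL_of_three_le {d : ℕ} (hd : 3 ≤ d) (F : Type*) [Field F] :
    ¬ Group.IsSolvable (SpecialLinearGroup (Fin d) F) := by
  have key : ∀ n : ℕ, ∀ (i j : Fin d) (hij : i ≠ j) (c : F),
      (transvection hij c : SpecialLinearGroup (Fin d) F) ∈ derivedSeries _ n := by
    intro n
    induction n with
    | zero => intro i j hij c; exact Subgroup.mem_top _
    | succ n ih =>
      intro i j hij c
      obtain ⟨k, hk⟩ : ∃ k, k ∉ ({i, j} : Finset (Fin d)) := by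
        by_contra! h
        have := Finset.card_le_card (fun x _ => h x : (Finset.univ : Finset (Fin d)) ⊆ {i, j})
        have h2 := Finset.card_le_two (a := i) (b := j)
        simp at this
        omega
      simp only [Finset.mem_insert, Finset.mem_singleton, not_or] at hk
      rw [transvection_commutator hij (Ne.symm hk.1) hk.2 c]
      exact Subgroup.commutator_mem_commutator (ih _ _ _ _) (ih _ _ _ _)
  have h01 : (⟨0, by omega⟩ : Fin d) ≠ ⟨1, by omega⟩ := by simp
  exact not_isSolvable_of_mem_derivedSeries (transvection_one_ne_one h01)
    fun n => key n _ _ h01 1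

/-- `SL₂(p)` is perfect for `p ≥ 5`; the element `2` is the unit with `2 ^ 2 ≠ 1` that the
commutator computation needs. -/
theorem not_isSolvable_SL_two {p : ℕ} [Fact p.Prime] (hp : 5 ≤ p) :
    ¬ Group.IsSolvable (SpecialLinearGroup (Fin 2) (ZMod p)) := by
  have cast_ne : ∀ m : ℕ, 0 < m → m < 5 → (m : ZMod p) ≠ 0 := by
    intro m h0 h5 h
    exact absurd (Nat.le_of_dvd h0 ((ZMod.natCast_eq_zero_iff _ _).1 h)) (by omega)
  have h2 : (2 : ZMod p) ≠ 0 := by simpa using cast_ne 2 (by omega) (by omega)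
  have h4 : (2 : ZMod p) ^ 2 ≠ 1 := by
    intro h
    apply cast_ne 3 (by omega) (by omega)
    push_cast
    linear_combination h
  have : Group.IsPerfect (SpecialLinearGroup (Fin 2) (ZMod p)) :=
    ⟨SL2.commutator_eq_top h2 h4⟩
  have : Nontrivial (SpecialLinearGroup (Fin 2) (ZMod p)) :=
    ⟨_, _, transvection_one_ne_one zero_ne_one⟩
  exact Group.IsPerfect.not_isSolvable _

/-- If all `ZMod p`-linear automorphisms of a space with at least 17 elements form a solvable
group, the space is a line. -/
theorem finrank_eq_one_of_isSolvable {p : ℕ} [Fact p.Prime] {V : Type*} [AddCommGroup V]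
    [Module (ZMod p) V] [Finite V] (hV : 17 ≤ Nat.card V)
    (hs : Group.IsSolvable (V ≃ₗ[ZMod p] V)) : Module.finrank (ZMod p) V = 1 := by
  have hcard := Module.natCard_eq_pow_finrank (K := ZMod p) (V := V)
  rw [Nat.card_zmod] at hcard
  set d := Module.finrank (ZMod p) V with hd
  let b : V ≃ₗ[ZMod p] (Fin d → ZMod p) := (Module.finBasis (ZMod p) V).equivFun
  have hSL : Group.IsSolvable (SpecialLinearGroup (Fin d) (ZMod p)) := by
    -- conjugation by the coordinates `b` embeds `SL_d(p)`
    let f : SpecialLinearGroup (Fin d) (ZMod p) →* (V ≃ₗ[ZMod p] V) :=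
      { toFun := fun A => b.trans ((SpecialLinearGroup.toLin' A).trans b.symm)
        map_one' := by ext; simp
        map_mul' := fun A B => by ext; simp }
    refine Group.isSolvable_of_isSolvable_injective (f := f) fun A B hAB => ?_
    apply SpecialLinearGroup.toLin'_injective
    refine LinearEquiv.ext fun x => ?_
    have h : b.symm (SpecialLinearGroup.toLin' A (b (b.symm x))) =
        b.symm (SpecialLinearGroup.toLin' B (b (b.symm x))) :=
      congrArg (fun e : V ≃ₗ[ZMod p] V => e (b.symm x)) hAB
    simpa using h
  clear b
  clear_value d
  by_contra h1
  rcases Nat.lt_or_ge d 3 with h3 | h3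
  · interval_cases d
    · simp at hcard; omega
    · exact h1 rfl
    · -- `p ^ 2 ≥ 17` forces `p ≥ 5`
      refine not_isSolvable_SL_two (p := p) ?_ hSL
      nlinarith
  · exact not_isSolvable_SL_of_three_le h3 _ hSL
end LinearPart

/-! ### Transitivity and primitivity -/

section Overgroups
open Equiv

/-- A permutation group into which a symmetric group of degree at least five embeds is not
solvable. -/
theorem not_isSolvable_of_perm_hom {α β : Type*} [Finite β] (hβ : 5 ≤ Nat.card β)
    (M : Subgroup (Perm α)) (f : Perm β →* Perm α) (hf : Function.Injective f)
    (hM : ∀ σ, f σ ∈ M) : ¬ Group.IsSolvable M := by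
  intro h
  refine Equiv.Perm.not_isSolvable β ?_ ?_
  · rw [← Nat.cast_card]
    exact_mod_cast hβ
  · refine Group.isSolvable_of_isSolvable_injective (f := f.codRestrict M hM) fun a b hab => ?_
    exact hf (congrArg Subtype.val hab)

open scoped Pointwise
variable {α : Type*} [Fintype α] [DecidableEq α]

/-- Every overgroup of `H` in `Perm α` is solvable or contains the alternating group. A solvable
maximal subgroup of `S_n` or of `A_n` has this property. -/
def OvergroupsSolvable (H : Subgroup (Perm α)) : Prop :=
  ∀ M : Subgroup (Perm α), H ≤ M → alternatingGroup α ≤ M ∨ Group.IsSolvable M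

theorem exists_not_mem_of_card_lt (s : Finset α) (h : s.card < Fintype.card α) :
    ∃ x, x ∉ s := by
  by_contra! hs
  rw [Finset.eq_univ_iff_forall.2 hs, Finset.card_univ] at h
  exact lt_irrefl _ h

/-- The 3-cycle `x → y → z → x`, as an element of the alternating group. -/
theorem exists_three_cycle {x y z : α} (hxy : x ≠ y) (hyz : y ≠ z) (hxz : x ≠ z) :
    ∃ t ∈ alternatingGroup α, t x = y ∧ t y = z ∧ t z = x ∧
      ∀ w, w ≠ x → w ≠ y → w ≠ z → t w = w := by
  refine ⟨swap x y * swap y z, ?_, ?_, ?_, ?_, ?_⟩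
  · simp [Equiv.Perm.mem_alternatingGroup, Equiv.Perm.sign_swap hxy, Equiv.Perm.sign_swap hyz]
  · rw [Perm.mul_apply, swap_apply_of_ne_of_ne hxy hxz, swap_apply_left]
  · rw [Perm.mul_apply, swap_apply_left, swap_apply_of_ne_of_ne hxz.symm hyz.symm]
  · rw [Perm.mul_apply, swap_apply_right, swap_apply_right]
  · intro w h1 h2 h3
    rw [Perm.mul_apply, swap_apply_of_ne_of_ne h2 h3, swap_apply_of_ne_of_ne h1 h2]

/-- `H` is transitive: otherwise the stabilizer of an orbit `Δ` lies above `H`. It does not contain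
a 3-cycle leading out of `Δ`, and it is not solvable because it contains the symmetric groups on `Δ`
and on its complement, one of which has degree at least five. -/
theorem OvergroupsSolvable.transitive {H : Subgroup (Perm α)} (hH : OvergroupsSolvable H)
    (hα : 17 ≤ Fintype.card α) (x y : α) : ∃ h ∈ H, h x = y := by
  classical
  by_contra hxy
  let Δ : Set α := {z | ∃ h ∈ H, h x = z}
  have hx : x ∈ Δ := ⟨1, H.one_mem, rfl⟩
  have hy : y ∉ Δ := hxy
  have hne : x ≠ y := fun h => hy (h ▸ hx)
  have hHM : H ≤ MulAction.stabilizer (Perm α) Δ := by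
    intro σ hσ
    rw [MulAction.mem_stabilizer_set]
    intro z
    constructor
    · rintro ⟨h, hh, hz⟩
      exact ⟨σ⁻¹ * h, H.mul_mem (H.inv_mem hσ) hh, by simp [hz]⟩
    · rintro ⟨h, hh, rfl⟩
      exact ⟨σ * h, H.mul_mem hσ hh, rfl⟩
  rcases hH _ hHM with hM | hM
  · obtain ⟨z, hz⟩ := exists_not_mem_of_card_lt {x, y}
      (lt_of_le_of_lt Finset.card_le_two (by omega))
    simp only [Finset.mem_insert, Finset.mem_singleton, not_or] at hz
    obtain ⟨t, ht, htx, -⟩ := exists_three_cycle hne (Ne.symm hz.2) (Ne.symm hz.1)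
    have := (MulAction.mem_stabilizer_set.1 (hM ht) x).2 hx
    rw [Perm.smul_def, htx] at this
    exact hy this
  · have key : ∀ p : α → Prop, (∀ z, p z ↔ z ∈ Δ) ∨ (∀ z, p z ↔ z ∉ Δ) →
        ¬ 5 ≤ Nat.card {z // p z} := by
      intro p hp h5
      refine not_isSolvable_of_perm_hom h5 _ (Perm.ofSubtype (p := p))
        Perm.ofSubtype_injective (fun σ => ?_) hM
      rw [MulAction.mem_stabilizer_set]
      intro z
      have hz : p (Perm.ofSubtype σ z) ↔ p z := by
        by_cases h : p z
        · rw [Perm.ofSubtype_apply_of_mem σ h]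
          simp [h, (σ ⟨z, h⟩).2]
        · rw [Perm.ofSubtype_apply_of_not_mem σ h]
      rw [Perm.smul_def]
      rcases hp with hp | hp
      · rw [← hp, ← hp, hz]
      · rw [← not_iff_not, ← hp, ← hp, hz]
    have h1 := key (· ∈ Δ) (Or.inl fun _ => Iff.rfl)
    have h2 := key (fun z => ¬ z ∈ Δ) (Or.inr fun _ => Iff.rfl)
    rw [Nat.card_eq_fintype_card] at h1 h2
    rw [Fintype.card_subtype_compl] at h2
    omega

/-- The stabilizer in `Perm α` of an equivalence relation. -/
def setoidStabilizer {α : Type*} (r : Setoid α) : Subgroup (Perm α) where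
  carrier := {σ | ∀ x y, r (σ x) (σ y) ↔ r x y}
  mul_mem' := fun {a b} ha hb x y => (ha _ _).trans (hb x y)
  one_mem' := fun _ _ => Iff.rfl
  inv_mem' := fun {a} ha x y => by
    have := ha (a⁻¹ x) (a⁻¹ y)
    simpa using this.symm

/-- `H` is primitive: an `H`-invariant equivalence relation that identifies two distinct points is
the total relation. Otherwise there are `a` classes of equal size `b` with `a * b ≥ 17`, so `a ≥ 5`
or `b ≥ 5`, and the stabilizer of the relation contains copies of `S_a` and of `S_b`. -/
theorem OvergroupsSolvable.primitive {H : Subgroup (Perm α)} (hH : OvergroupsSolvable H)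
    (hα : 17 ≤ Fintype.card α) (r : Setoid α) (hr : ∀ h ∈ H, ∀ x y, r x y → r (h x) (h y))
    {x₀ y₀ : α} (hne : x₀ ≠ y₀) (hxy₀ : r x₀ y₀) (x y : α) : r x y := by
  classical
  have htr := hH.transitive hα
  by_contra hxy
  have hHM : H ≤ setoidStabilizer r := fun h hh x y =>
    ⟨fun hxy => by simpa using hr h⁻¹ (H.inv_mem hh) _ _ hxy, hr h hh x y⟩
  rcases hH _ hHM with hM | hM
  · obtain ⟨z, hz⟩ : ∃ z, ¬ r x₀ z := by
      by_contra! h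
      exact hxy (r.trans (r.symm (h x)) (h y))
    have hxz : x₀ ≠ z := fun h => hz (h ▸ r.refl x₀)
    have hyz : y₀ ≠ z := fun h => hz (h ▸ hxy₀)
    obtain ⟨w, hw⟩ := exists_not_mem_of_card_lt {x₀, y₀, z}
      (lt_of_le_of_lt Finset.card_le_three (by omega))
    simp only [Finset.mem_insert, Finset.mem_singleton, not_or] at hw
    obtain ⟨t, ht, hty, -, -, htf⟩ := exists_three_cycle hyz (Ne.symm hw.2.2) (Ne.symm hw.2.1)
    have := (hM ht x₀ y₀).2 hxy₀
    rw [hty, htf x₀ hne hxz (Ne.symm hw.1)] at this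
    exact hz this
  · have hfib : ∀ q : Quotient r, Nonempty ({a // Quotient.mk r a = q} ≃
        {a // Quotient.mk r a = Quotient.mk r x₀}) := by
      intro q
      induction q using Quotient.inductionOn with
      | h z =>
        obtain ⟨h, hh, hz⟩ := htr z x₀
        refine ⟨Equiv.subtypeEquiv h fun a => ?_⟩
        rw [Quotient.eq, Quotient.eq, ← hz]
        exact ((hHM hh) a z).symm
    -- by transitivity all classes are equivalent, so `α` is a product on which the relation is
    -- equality of first coordinates
    let F := fun q => (hfib q).some
    let e : α ≃ Quotient r × {a // Quotient.mk r a = Quotient.mk r x₀} :=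
      (Equiv.sigmaFiberEquiv (Quotient.mk r)).symm.trans
        ((Equiv.sigmaCongrRight F).trans (Equiv.sigmaEquivProd _ _))
    have he : ∀ z, (e z).1 = Quotient.mk r z := fun z => rfl
    have her : ∀ z w, r z w ↔ (e z).1 = (e w).1 := fun z w => by
      rw [he, he, Quotient.eq]
    have hcard : Nat.card α = _ := (Nat.card_congr e).trans (Nat.card_prod _ _)
    rw [Nat.card_eq_fintype_card] at hcard
    have h1 : ¬ 5 ≤ Nat.card (Quotient r) := by
      intro h5
      refine not_isSolvable_of_perm_hom h5 (setoidStabilizer r)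
        { toFun := fun σ => e.permCongr.symm (Equiv.prodCongr σ (Equiv.refl _))
          map_one' := by ext; simp
          map_mul' := fun σ τ => by ext; simp; rfl } ?_ ?_ hM
      · intro σ τ hστ
        ext q
        obtain ⟨z, rfl⟩ := Quotient.exists_rep q
        have := congrArg (fun f : Perm α => (e (f z)).1) hστ
        simpa [he] using this
      · intro σ z w
        simp [her]
    have h2 : ¬ 5 ≤ Nat.card {a // Quotient.mk r a = Quotient.mk r x₀} := by
      intro h5
      refine not_isSolvable_of_perm_hom h5 (setoidStabilizer r)
        { toFun := fun σ => e.permCongr.symm (Equiv.prodCongr (Equiv.refl _) σ)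
          map_one' := by ext; simp
          map_mul' := fun σ τ => by ext; simp; rfl } ?_ ?_ hM
      · intro σ τ hστ
        apply Equiv.ext
        intro q
        have := congrArg (fun f : Perm α => (e (f (e.symm (Quotient.mk r x₀, q)))).2) hστ
        simpa using this
      · intro σ z w
        simp [her]
    nlinarith

/-- A nontrivial subgroup normalized by the primitive group `H` is transitive, since its orbits are
the classes of an `H`-invariant relation. -/
theorem OvergroupsSolvable.transitive_of_normalized {H : Subgroup (Perm α)}
    (hH : OvergroupsSolvable H) (hα : 17 ≤ Fintype.card α) {A : Subgroup (Perm α)} (hA : A ≠ ⊥)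
    (hHA : ∀ h ∈ H, ∀ a ∈ A, h * a * h⁻¹ ∈ A) (x y : α) : ∃ a ∈ A, a x = y := by
  obtain ⟨a₀, ha₀, hne⟩ := Subgroup.ne_bot_iff_exists_ne_one.1 hA |>.elim
    fun a ha => (⟨a.1, a.2, fun h => ha (Subtype.ext h)⟩ : ∃ a ∈ A, a ≠ 1)
  obtain ⟨x₀, hx₀⟩ : ∃ x₀, a₀ x₀ ≠ x₀ := by
    by_contra! h
    exact hne (Equiv.ext h)
  let r : Setoid α :=
    { r := fun x y => ∃ a ∈ A, a x = y
      iseqv :=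
        { refl := fun x => ⟨1, A.one_mem, rfl⟩
          symm := by
            rintro x _ ⟨a, ha, rfl⟩
            exact ⟨a⁻¹, A.inv_mem ha, by simp⟩
          trans := by
            rintro x _ _ ⟨a, ha, rfl⟩ ⟨b, hb, rfl⟩
            exact ⟨b * a, A.mul_mem hb ha, rfl⟩ } }
  refine hH.primitive hα r ?_ hx₀.symm ⟨a₀, ha₀, rfl⟩ x y
  rintro h hh x _ ⟨a, ha, rfl⟩
  exact ⟨h * a * h⁻¹, hHA h hh a ha, by simp⟩

end Overgroups

/-! ### Affine structure of solvable primitive groups -/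

section Affine
open Equiv
universe u

/-- A nontrivial finite solvable subgroup `H` normalizes a nontrivial elementary abelian
subgroup: the `p`-torsion of the last nontrivial term of the derived series of `H`. -/
theorem exists_elementary_abelian {G : Type*} [Group G] [Finite G] (H : Subgroup G)
    (hs : Group.IsSolvable H) (hH : H ≠ ⊥) :
    ∃ (p : ℕ) (_ : Fact p.Prime) (A : Subgroup G), A ≠ ⊥ ∧
      (∀ h ∈ H, ∀ a ∈ A, h * a * h⁻¹ ∈ A) ∧ (∀ a ∈ A, ∀ b ∈ A, a * b = b * a) ∧
      ∀ a ∈ A, a ^ p = 1 := by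
  classical
  have hex := hs.solvable
  have hn : derivedSeries H (Nat.find hex) = ⊥ := Nat.find_spec hex
  obtain ⟨m, hm⟩ : ∃ m, Nat.find hex = m + 1 := by
    refine Nat.exists_eq_succ_of_ne_zero fun h0 => ?_
    rw [h0, derivedSeries_zero] at hn
    apply hH
    rw [eq_bot_iff]
    intro x hx
    have : (⟨x, hx⟩ : H) ∈ (⊥ : Subgroup H) := hn ▸ Subgroup.mem_top _
    simpa using this
  have hD : derivedSeries H m ≠ ⊥ := Nat.find_min hex (by omega)
  rw [hm, derivedSeries_succ, Subgroup.commutator_eq_bot_iff_le_centralizer] at hn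
  set D := derivedSeries H m with hDdef
  have hDn : D.Normal := derivedSeries_normal _ _
  have hcard : Nat.card D ≠ 1 := fun h => hD (Subgroup.card_eq_one.1 h)
  have hp : (Nat.card D).minFac.Prime := Nat.minFac_prime hcard
  have : Fact (Nat.card D).minFac.Prime := ⟨hp⟩
  obtain ⟨x, hx⟩ := exists_prime_orderOf_dvd_card' (G := D) _ (Nat.minFac_dvd (Nat.card D))
  set p := (Nat.card D).minFac with hpdef
  have hcomm : ∀ a ∈ D, ∀ b ∈ D, a * b = b * a := fun a ha b hb =>
    Subgroup.mem_centralizer_iff.1 (hn hb) a ha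
  refine ⟨p, this,
    { carrier := {g | ∃ h : H, h ∈ D ∧ h ^ p = 1 ∧ (h : G) = g}
      mul_mem' := ?_
      one_mem' := ⟨1, D.one_mem, one_pow _, rfl⟩
      inv_mem' := ?_ }, ?_, ?_, ?_, ?_⟩
  · rintro _ _ ⟨a, ha, hap, rfl⟩ ⟨b, hb, hbp, rfl⟩
    refine ⟨a * b, D.mul_mem ha hb, ?_, rfl⟩
    rw [(show Commute a b from hcomm a ha b hb).mul_pow, hap, hbp, one_mul]
  · rintro _ ⟨a, ha, hap, rfl⟩
    exact ⟨a⁻¹, D.inv_mem ha, by rw [inv_pow, hap, inv_one], rfl⟩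
  · intro hbot
    have hxA : ((x : H) : G) ∈ (⊥ : Subgroup G) := by
      rw [← hbot]
      refine ⟨x, x.2, ?_, rfl⟩
      have := pow_orderOf_eq_one x
      rw [hx] at this
      exact_mod_cast congrArg Subtype.val this
    have hx1 : x = 1 := by
      apply Subtype.ext
      apply Subtype.ext
      simpa using hxA
    rw [hx1, orderOf_one] at hx
    exact hp.one_lt.ne hx
  · rintro h hh _ ⟨a, ha, hap, rfl⟩
    refine ⟨⟨h, hh⟩ * a * ⟨h, hh⟩⁻¹, hDn.conj_mem a ha _, ?_, rfl⟩
    rw [conj_pow, hap, mul_one, mul_inv_cancel]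
  · rintro _ ⟨a, ha, -, rfl⟩ _ ⟨b, hb, -, rfl⟩
    exact congrArg Subtype.val (hcomm a ha b hb)
  · rintro _ ⟨a, -, hap, rfl⟩
    exact_mod_cast congrArg Subtype.val hap

/-- The permutations of `α` that become affine, `v ↦ φ v + b` with `φ` additive, once `α` is
labelled by the additive group `V` through `E`. -/
def affinePerms {V α : Type*} [AddCommGroup V] (E : V ≃ α) : Subgroup (Perm α) where
  carrier := {σ | ∃ (φ : V ≃+ V) (b : V), ∀ v, σ (E v) = E (φ v + b)}
  mul_mem' := by
    rintro σ τ ⟨φ, b, hσ⟩ ⟨ψ, c, hτ⟩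
    refine ⟨ψ.trans φ, φ c + b, fun v => ?_⟩
    rw [Perm.mul_apply, hτ, hσ, map_add φ, add_assoc]
    rfl
  one_mem' := ⟨AddEquiv.refl V, 0, fun v => by simp⟩
  inv_mem' := by
    rintro σ ⟨φ, b, hσ⟩
    refine ⟨φ.symm, -φ.symm b, fun v => ?_⟩
    rw [Perm.inv_eq_iff_eq, hσ]
    simp

theorem mem_affinePerms {V α : Type*} [AddCommGroup V] {E : V ≃ α} {σ : Perm α} :
    σ ∈ affinePerms E ↔ ∃ (φ : V ≃+ V) (b : V), ∀ v, σ (E v) = E (φ v + b) := Iff.rfl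

/-- An abelian transitive group `A` is regular; when it is elementary abelian, labelling `α` by `A`
via the orbit map of a point turns permutations normalizing `A` into affine ones. -/
theorem exists_affine_of_elementary_abelian {α : Type u} [Nonempty α] {p : ℕ}
    (H A : Subgroup (Perm α)) (hHA : ∀ h ∈ H, ∀ a ∈ A, h * a * h⁻¹ ∈ A)
    (hcomm : ∀ a ∈ A, ∀ b ∈ A, a * b = b * a) (hp : ∀ a ∈ A, a ^ p = 1)
    (htr : ∀ x y : α, ∃ a ∈ A, a x = y) :
    ∃ (V : Type u) (_ : AddCommGroup V) (_ : Module (ZMod p) V) (E : V ≃ α),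
      H ≤ affinePerms E := by
  let _ : CommGroup A :=
    { (inferInstance : Group A) with mul_comm := fun a b => Subtype.ext (hcomm a a.2 b b.2) }
  let _ : Module (ZMod p) (Additive A) := AddCommGroup.zmodModule fun a =>
    (Subtype.ext (hp a.toMul a.toMul.2) : a.toMul ^ p = 1)
  obtain ⟨x₀⟩ := ‹Nonempty α›
  -- a transitive abelian group acts freely
  have hinj : ∀ a ∈ A, ∀ b ∈ A, a x₀ = b x₀ → a = b := by
    intro a ha b hb hab
    refine Equiv.ext fun y => ?_
    obtain ⟨c, hc, rfl⟩ := htr x₀ y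
    have h1 := congrArg (fun f : Perm α => f x₀) (hcomm a ha c hc)
    have h2 := congrArg (fun f : Perm α => f x₀) (hcomm b hb c hc)
    simp only [Perm.mul_apply] at h1 h2
    rw [h1, h2, hab]
  let E : Additive A ≃ α := Equiv.ofBijective (fun a => (a.toMul : Perm α) x₀)
    ⟨fun a b hab => Subtype.ext (hinj _ a.toMul.2 _ b.toMul.2 hab), fun y => by
      obtain ⟨a, ha, hy⟩ := htr x₀ y
      exact ⟨Additive.ofMul ⟨a, ha⟩, hy⟩⟩
  have hE : ∀ a, E a = (a.toMul : Perm α) x₀ := fun _ => rfl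
  refine ⟨Additive A, inferInstance, inferInstance, E, fun h hh => ?_⟩
  obtain ⟨b, hb, hbx⟩ := htr x₀ (h x₀)
  let φ : A ≃* A :=
    { toFun := fun a => ⟨h * a * h⁻¹, hHA h hh a a.2⟩
      invFun := fun a => ⟨h⁻¹ * a * h, by simpa using hHA h⁻¹ (H.inv_mem hh) a a.2⟩
      left_inv := fun a => by ext; simp
      right_inv := fun a => by ext; simp
      map_mul' := fun a b => by ext; simp }
  refine ⟨MulEquiv.toAdditive φ, Additive.ofMul ⟨b, hb⟩, fun v => ?_⟩
  rw [hE, hE]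
  change h ((v.toMul : Perm α) x₀) = (h * v.toMul * h⁻¹ * b) x₀
  simp [hbx]

/-- The full affine group does not contain the alternating group: an affine map fixing `E 0` and
`E v` and sending `E y` to `E z` also sends `E (v + y)` to `E (v + z)`. -/
theorem not_alternatingGroup_le_affinePerms {V α : Type*} [AddCommGroup V] [Fintype α]
    [DecidableEq α] (E : V ≃ α) (hα : 17 ≤ Fintype.card α) :
    ¬ alternatingGroup α ≤ affinePerms E := by
  intro hle
  have pick : ∀ s : Finset α, s.card < 17 → ∃ v : V, E v ∉ s := fun s hs => by
    obtain ⟨x, hx⟩ := exists_not_mem_of_card_lt s (by omega)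
    exact ⟨E.symm x, by simpa using hx⟩
  obtain ⟨v, hv⟩ := pick {E 0} (by simp)
  obtain ⟨y, hy⟩ := pick {E 0, E v} (lt_of_le_of_lt Finset.card_le_two (by omega))
  obtain ⟨z, hz⟩ := pick {E 0, E v, E y, E (v + y)}
    (lt_of_le_of_lt Finset.card_le_four (by omega))
  obtain ⟨w, hw⟩ := pick {E 0, E v, E y, E (v + y), E z}
    (lt_of_le_of_lt Finset.card_le_five (by omega))
  simp only [Finset.mem_insert, Finset.mem_singleton, not_or, E.injective.eq_iff] at hv hy hz hw
  obtain ⟨t, ht, hty, -, -, htf⟩ := exists_three_cycle (E.injective.ne (Ne.symm hz.2.2.1))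
    (E.injective.ne (Ne.symm hw.2.2.2.2)) (E.injective.ne (Ne.symm hw.2.2.1))
  obtain ⟨φ, b, hφ⟩ := hle ht
  have hfix : ∀ u, u ≠ y → u ≠ z → u ≠ w → φ u + b = u := fun u h1 h2 h3 => by
    apply E.injective
    rw [← hφ, htf _ (E.injective.ne h1) (E.injective.ne h2) (E.injective.ne h3)]
  have hb : b = 0 := by
    simpa using hfix 0 (Ne.symm hy.1) (Ne.symm hz.1) (Ne.symm hw.1)
  subst hb
  have hφv : φ v = v := by
    simpa using hfix v (Ne.symm hy.2) (Ne.symm hz.2.1) (Ne.symm hw.2.1)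
  have hφvy : φ (v + y) = v + y := by
    simpa using hfix (v + y) (fun h => hv (by simpa using h)) (Ne.symm hz.2.2.2)
      (Ne.symm hw.2.2.2.1)
  have hφy : φ y = z := by
    rw [hφ] at hty
    simpa using E.injective hty
  rw [map_add, hφv, hφy] at hφvy
  exact hz.2.2.1 (add_left_cancel hφvy)

/-- A solvable `H` with `OvergroupsSolvable H` acts as a group of affine maps `x ↦ a * x + b` on a
prime field: it lies in an affine group over some `V`, which is then solvable itself, so that
`GL(V)` is solvable and `V` is a line. -/
theorem OvergroupsSolvable.exists_affine {α : Type*} [Fintype α] [DecidableEq α]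
    {H : Subgroup (Perm α)} (hH : OvergroupsSolvable H) (hα : 17 ≤ Fintype.card α)
    (hs : Group.IsSolvable H) :
    ∃ p : ℕ, p = Fintype.card α ∧ p.Prime ∧ ∃ E : ZMod p ≃ α, H ≤ affinePerms E := by
  have : Nontrivial α := Fintype.one_lt_card_iff_nontrivial.1 (by omega)
  have hbot : H ≠ ⊥ := by
    rintro rfl
    obtain ⟨x, y, hxy⟩ := exists_pair_ne α
    obtain ⟨h, hh, rfl⟩ := hH.transitive hα x y
    rw [Subgroup.mem_bot] at hh
    simp [hh] at hxy
  obtain ⟨p, hp, A, hA, hHA, hcomm, hpA⟩ := exists_elementary_abelian H hs hbot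
  obtain ⟨V, _, _, E, hE⟩ := exists_affine_of_elementary_abelian H A hHA hcomm hpA
    (hH.transitive_of_normalized hα hA hHA)
  have hM : Group.IsSolvable (affinePerms E) :=
    (hH _ hE).resolve_left (not_alternatingGroup_le_affinePerms E hα)
  have : Finite V := Finite.of_equiv α E.symm
  have hV : Nat.card V = Fintype.card α := by
    rw [Nat.card_congr E, Nat.card_eq_fintype_card]
  have hGL : Group.IsSolvable (V ≃ₗ[ZMod p] V) := by
    let f : (V ≃ₗ[ZMod p] V) →* affinePerms E :=
      { toFun := fun φ => ⟨E.permCongr φ.toEquiv, φ.toAddEquiv, 0, fun v => by simp⟩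
        map_one' := by ext; simp
        map_mul' := fun φ ψ => by ext; simp }
    refine Group.isSolvable_of_isSolvable_injective (f := f) fun φ ψ hφψ => ?_
    refine LinearEquiv.ext fun v => ?_
    have := congrArg (fun σ : affinePerms E => (σ : Perm α) (E v)) hφψ
    simpa [f] using this
  have h1 := finrank_eq_one_of_isSolvable (hV ▸ hα) hGL
  let ℓ : ZMod p ≃ₗ[ZMod p] V :=
    LinearEquiv.ofFinrankEq _ _ (by rw [h1, Module.finrank_self])
  refine ⟨p, ?_, hp.out, ℓ.toEquiv.trans E, ?_⟩
  · rw [← hV, ← Nat.card_congr ℓ.toEquiv, Nat.card_zmod]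
  · intro h hh
    obtain ⟨φ, b, hφ⟩ := hE hh
    refine ⟨(ℓ.toAddEquiv.trans φ).trans ℓ.toAddEquiv.symm, ℓ.symm b, fun v => ?_⟩
    have := hφ (ℓ v)
    simpa using this

end Affine

/-! ### Trivially intersecting affine groups of prime degree -/

section Intersection
open Equiv

/-- If `t` moves only few points and intertwines the affine maps `x ↦ c * x + d` and
`x ↦ a * x + b` of `ZMod p`, then these two maps agree at two points, hence are equal. -/
theorem affine_eq_of_intertwine {p : ℕ} [Fact p.Prime] (hp : 17 ≤ p) (t : Perm (ZMod p))
    (S : Finset (ZMod p)) (hS : S.card ≤ 4) (ht : ∀ x, x ∉ S → t x = x)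
    {a b c d : ZMod p} (hc : c ≠ 0) (h : ∀ x, a * t x + b = t (c * x + d)) :
    a = c ∧ b = d := by
  classical
  -- the points `x` for which `t` may move `x` or `c * x + d`
  set B : Finset (ZMod p) := S ∪ S.image (fun s => (s - d) * c⁻¹) with hB
  have hBc : B.card ≤ 8 := by
    have h1 := Finset.card_union_le S (S.image (fun s => (s - d) * c⁻¹))
    have h2 := Finset.card_image_le (s := S) (f := fun s => (s - d) * c⁻¹)
    rw [← hB] at h1
    omega
  have hgood : ∀ x, x ∉ B → a * x + b = c * x + d := by
    intro x hx
    rw [hB, Finset.mem_union, not_or] at hx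
    have hx2 : c * x + d ∉ S := fun hmem =>
      hx.2 (Finset.mem_image.2 ⟨_, hmem, by field_simp; ring⟩)
    have := h x
    rwa [ht x hx.1, ht _ hx2] at this
  obtain ⟨x, hx⟩ := exists_not_mem_of_card_lt B (by rw [ZMod.card]; omega)
  obtain ⟨y, hy⟩ := exists_not_mem_of_card_lt (insert x B)
    (by rw [ZMod.card]; have := Finset.card_insert_le x B; omega)
  rw [Finset.mem_insert, not_or] at hy
  have h1 := hgood x hx
  have h2 := hgood y hy.2
  have h3 : (a - c) * (x - y) = 0 := by linear_combination h1 - h2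
  have hac : a = c := by
    rcases mul_eq_zero.1 h3 with h | h
    · exact sub_eq_zero.1 h
    · exact absurd (sub_eq_zero.1 h).symm hy.1
  refine ⟨hac, ?_⟩
  rw [hac] at h1
  exact add_left_cancel h1

theorem natCast_ne_zero_of_lt {p : ℕ} (hp : 17 ≤ p) (m : ℕ) (h0 : 0 < m) (hm : m < 17) :
    (m : ZMod p) ≠ 0 := fun h =>
  absurd (Nat.le_of_dvd h0 ((ZMod.natCast_eq_zero_iff _ _).1 h)) (by omega)

/-- There is an even (the 3-cycle `(0 1 2)`) and an odd (the 4-cycle `(0 1 2 3)`) permutation of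
`ZMod p` that intertwines no two affine permutations other than the identity. Two intertwined affine
permutations coincide, so `t` commutes with `f x = a * x + b`. Either `t` fixes `b = f 0`, hence
fixes `0`, which is false, or `f` agrees on the cycle with a power of `t`, and only the trivial power
is affine. -/
theorem exists_twist {p : ℕ} [Fact p.Prime] (hp : 17 ≤ p) (s : ℤˣ) :
    ∃ t : Perm (ZMod p), Perm.sign t = s ∧ ∀ a b c d : ZMod p, c ≠ 0 →
      (∀ x, a * t x + b = t (c * x + d)) → a = 1 ∧ b = 0 := by
  have h1 : (1 : ZMod p) ≠ 0 := one_ne_zero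
  have h2 : (2 : ZMod p) ≠ 0 := by simpa using natCast_ne_zero_of_lt hp 2 (by omega) (by omega)
  have h3 : (3 : ZMod p) ≠ 0 := by simpa using natCast_ne_zero_of_lt hp 3 (by omega) (by omega)
  have h4 : (4 : ZMod p) ≠ 0 := by simpa using natCast_ne_zero_of_lt hp 4 (by omega) (by omega)
  have h12 : (1 : ZMod p) ≠ 2 := fun h => h1 (by linear_combination -h)
  have h13 : (1 : ZMod p) ≠ 3 := fun h => h2 (by linear_combination -h)
  have h23 : (2 : ZMod p) ≠ 3 := fun h => h1 (by linear_combination -h)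
  rcases Int.units_eq_one_or s with rfl | rfl
  · set t : Perm (ZMod p) := swap 0 1 * swap 1 2 with ht
    have t0 : t 0 = 1 := by
      rw [ht, Perm.mul_apply, swap_apply_of_ne_of_ne h1.symm h2.symm, swap_apply_left]
    have t1 : t 1 = 2 := by
      rw [ht, Perm.mul_apply, swap_apply_left, swap_apply_of_ne_of_ne h2 h12.symm]
    have t2 : t 2 = 0 := by rw [ht, Perm.mul_apply, swap_apply_right, swap_apply_right]
    have tf : ∀ x, x ∉ ({0, 1, 2} : Finset (ZMod p)) → t x = x := by
      intro x hx
      simp only [Finset.mem_insert, Finset.mem_singleton, not_or] at hx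
      rw [ht, Perm.mul_apply, swap_apply_of_ne_of_ne hx.2.1 hx.2.2,
        swap_apply_of_ne_of_ne hx.1 hx.2.1]
    refine ⟨t, by simp [ht, Perm.sign_swap h1.symm, Perm.sign_swap h12], ?_⟩
    intro a b c d hc h
    obtain ⟨rfl, rfl⟩ := affine_eq_of_intertwine hp t {0, 1, 2}
      (Finset.card_le_three.trans (by omega)) tf hc h
    have e0 := h 0
    have e1 := h 1
    rw [t0, mul_one, mul_zero, zero_add] at e0
    rw [t1, mul_one] at e1
    by_cases hb : b ∈ ({0, 1, 2} : Finset (ZMod p))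
    · simp only [Finset.mem_insert, Finset.mem_singleton] at hb
      rcases hb with rfl | rfl | rfl
      · exact ⟨by simpa [t0] using e0, rfl⟩
      · rw [t1] at e0
        rw [e0, t2] at e1
        exact absurd (by linear_combination e1 - 2 * e0) h3
      · rw [t2] at e0
        rw [e0, t0] at e1
        exact absurd (by linear_combination 2 * e0 - e1) h3
    · rw [tf b hb] at e0
      exact absurd (by linear_combination e0) hc
  · set t : Perm (ZMod p) := swap 0 1 * swap 1 2 * swap 2 3 with ht
    have t0 : t 0 = 1 := by
      rw [ht, Perm.mul_apply, Perm.mul_apply, swap_apply_of_ne_of_ne h2.symm h3.symm,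
        swap_apply_of_ne_of_ne h1.symm h2.symm, swap_apply_left]
    have t1 : t 1 = 2 := by
      rw [ht, Perm.mul_apply, Perm.mul_apply, swap_apply_of_ne_of_ne h12 h13, swap_apply_left,
        swap_apply_of_ne_of_ne h2 h12.symm]
    have t2 : t 2 = 3 := by
      rw [ht, Perm.mul_apply, Perm.mul_apply, swap_apply_left,
        swap_apply_of_ne_of_ne h13.symm h23.symm, swap_apply_of_ne_of_ne h3 h13.symm]
    have t3 : t 3 = 0 := by
      rw [ht, Perm.mul_apply, Perm.mul_apply, swap_apply_right, swap_apply_right,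
        swap_apply_right]
    have tf : ∀ x, x ∉ ({0, 1, 2, 3} : Finset (ZMod p)) → t x = x := by
      intro x hx
      simp only [Finset.mem_insert, Finset.mem_singleton, not_or] at hx
      rw [ht, Perm.mul_apply, Perm.mul_apply, swap_apply_of_ne_of_ne hx.2.2.1 hx.2.2.2,
        swap_apply_of_ne_of_ne hx.2.1 hx.2.2.1, swap_apply_of_ne_of_ne hx.1 hx.2.1]
    refine ⟨t, by simp [ht, Perm.sign_swap h1.symm, Perm.sign_swap h12, Perm.sign_swap h23], ?_⟩
    intro a b c d hc h
    obtain ⟨rfl, rfl⟩ := affine_eq_of_intertwine hp t {0, 1, 2, 3} Finset.card_le_four tf hc h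
    have e0 := h 0
    have e1 := h 1
    have e2 := h 2
    rw [t0, mul_one, mul_zero, zero_add] at e0
    rw [t1, mul_one] at e1
    rw [t2] at e2
    by_cases hb : b ∈ ({0, 1, 2, 3} : Finset (ZMod p))
    · simp only [Finset.mem_insert, Finset.mem_singleton] at hb
      rcases hb with rfl | rfl | rfl | rfl
      · exact ⟨by simpa [t0] using e0, rfl⟩
      · rw [t1] at e0
        rw [e0, t2] at e1
        rw [e1, t3] at e2
        exact absurd (by linear_combination e2 - 3 * e0) h4
      · rw [t2] at e0
        rw [e0, t3] at e1
        exact absurd (by linear_combination e1 - 2 * e0) h4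
      · rw [t3] at e0
        rw [e0, t0] at e1
        exact absurd (by linear_combination 2 * e0 - e1) h4
    · rw [tf b hb] at e0
      exact absurd (by linear_combination e0) hc

/-- Two affine groups of prime degree have a pair of conjugates, under an even permutation, that
intersect trivially. -/
theorem exists_even_conj_disjoint {p : ℕ} [Fact p.Prime] (hp : 17 ≤ p) {α : Type*} [Fintype α]
    [DecidableEq α] (E E' : ZMod p ≃ α) :
    ∃ g ∈ alternatingGroup α, ∀ σ ∈ affinePerms E, ∀ τ ∈ affinePerms E',
      g * τ * g⁻¹ = σ → σ = 1 := by
  obtain ⟨t, hts, ht⟩ := exists_twist hp (Perm.sign (E'.symm.trans E))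
  have hlin : ∀ (φ : ZMod p ≃+ ZMod p) (x : ZMod p), φ x = φ 1 * x := by
    intro φ x
    have := ZMod.map_smul φ x (1 : ZMod p)
    simpa [mul_comm] using this
  -- `t` has the sign of `E'.symm.trans E`, so this conjugator, which maps `E' x` to `E (t x)`, is even
  refine ⟨E.permCongr t * E'.symm.trans E, ?_, ?_⟩
  · rw [Perm.mem_alternatingGroup, Perm.sign_mul, Perm.sign_permCongr, hts,
      Int.units_mul_self]
  · rintro σ ⟨φ, b, hσ⟩ τ ⟨ψ, d, hτ⟩ hg
    have hψ : ψ 1 ≠ 0 := by simp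
    have key : ∀ x, φ 1 * t x + b = t (ψ 1 * x + d) := by
      intro x
      have h := congrArg (fun f : Perm α => f (E' x)) (mul_inv_eq_iff_eq_mul.1 hg)
      simp only [Perm.mul_apply, trans_apply, symm_apply_apply, hτ, permCongr_apply, hσ] at h
      rw [← hlin, ← hlin]
      exact (E.injective h).symm
    obtain ⟨ha, rfl⟩ := ht _ _ _ _ hψ key
    refine Equiv.ext fun z => ?_
    obtain ⟨x, rfl⟩ := E.surjective z
    rw [hσ, hlin, ha]
    simp

end Intersection

/-! ### Maximal subgroups -/

section Final
open Equiv

/-- A solvable maximal subgroup `H` of a permutation group `G` containing the alternating group has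
the property `OvergroupsSolvable`. An overgroup `M` satisfies `M ∩ G = G` or `M ∩ G = H`; in the
second case the even part of `M` is contained in `H`, so `M` is an extension of a solvable group by
a group of signs. -/
theorem overgroupsSolvable_of_isCoatom {α : Type*} [Fintype α] [DecidableEq α]
    {G : Subgroup (Perm α)} (hG : alternatingGroup α ≤ G) (H : Subgroup G)
    (hs : Group.IsSolvable H) (hH : IsCoatom H) : OvergroupsSolvable (H.map G.subtype) := by
  intro M hM
  have hle : H ≤ M.subgroupOf G := fun x hx => hM (Subgroup.mem_map_of_mem _ hx)
  rcases hH.le_iff.1 hle with h | h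
  · exact Or.inl (hG.trans (Subgroup.subgroupOf_eq_top.1 h))
  · right
    let f : (Perm.sign.comp M.subtype).ker →* G :=
      (M.subtype.comp (Perm.sign.comp M.subtype).ker.subtype).codRestrict G
        fun x => hG (Perm.mem_alternatingGroup.2 (MonoidHom.mem_ker.1 x.2))
    have hf : ∀ x, f x ∈ H := fun x => by
      rw [← h, Subgroup.mem_subgroupOf]
      exact x.1.2
    have : Group.IsSolvable (Perm.sign.comp M.subtype).ker :=
      Group.isSolvable_of_isSolvable_injective (f := f.codRestrict H hf) fun x y hxy =>
        Subtype.ext (Subtype.ext (congrArg (fun z : H => ((z : G) : Perm α)) hxy))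
    exact Group.isSolvable_of_ker_le_range (Perm.sign.comp M.subtype).ker.subtype
      (Perm.sign.comp M.subtype) (by simp)

/-- Any two solvable maximal subgroups of a permutation group `G` containing the alternating group
have conjugates, under an even permutation, that intersect trivially. -/
theorem exists_even_conj_of_isCoatom {α : Type*} [Fintype α] [DecidableEq α]
    (hα : 17 ≤ Fintype.card α) {G : Subgroup (Perm α)} (hG : alternatingGroup α ≤ G)
    (H K : Subgroup G) (hHs : Group.IsSolvable H) (hH : IsCoatom H)
    (hKs : Group.IsSolvable K) (hK : IsCoatom K) :
    ∃ g : G, H ⊓ conjSub g K = ⊥ := by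
  have hs : ∀ L : Subgroup G, Group.IsSolvable L → Group.IsSolvable (L.map G.subtype) :=
    fun L _ => Group.isSolvable_of_surjective
      (f := (L.equivMapOfInjective G.subtype G.subtype_injective).toMonoidHom)
      (L.equivMapOfInjective G.subtype G.subtype_injective).surjective
  obtain ⟨p, hp, hprime, E, hE⟩ :=
    (overgroupsSolvable_of_isCoatom hG H hHs hH).exists_affine hα (hs H hHs)
  obtain ⟨q, hq, -, E', hE'⟩ :=
    (overgroupsSolvable_of_isCoatom hG K hKs hK).exists_affine hα (hs K hKs)
  obtain rfl : p = q := hp.trans hq.symm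
  have : Fact p.Prime := ⟨hprime⟩
  obtain ⟨g, hg, hgE⟩ := exists_even_conj_disjoint (hp ▸ hα) E E'
  refine ⟨⟨g, hG hg⟩, ?_⟩
  rw [eq_bot_iff]
  rintro x ⟨hxH, k, hkK, hkx⟩
  rw [Subgroup.mem_bot]
  apply Subtype.ext
  exact hgE x (hE (Subgroup.mem_map_of_mem _ hxH)) k (hE' (Subgroup.mem_map_of_mem _ hkK))
    (congrArg Subtype.val hkx)

end Final

theorem soluble_maximal_pairs_are_regular (n : ℕ) (hn : 17 ≤ n) :
    -- G = Sₙ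
    (∀ H K : Subgroup (Equiv.Perm (Fin n)),
        IsSolvable ↥H → IsCoatom H → IsSolvable ↥K → IsCoatom K →
        ∃ g : Equiv.Perm (Fin n), H ⊓ conjSub g K = ⊥) ∧
    -- G = Aₙ
    (∀ H K : Subgroup ↥(alternatingGroup (Fin n)),
        IsSolvable ↥H → IsCoatom H → IsSolvable ↥K → IsCoatom K →
        ∃ g : ↥(alternatingGroup (Fin n)), H ⊓ conjSub g K = ⊥) := by
  have hn' : 17 ≤ Fintype.card (Fin n) := by simpa using hn
  refine ⟨fun H K hHs hH hKs hK => ?_, fun H K hHs hH hKs hK =>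
    exists_even_conj_of_isCoatom hn' le_rfl H K hHs hH hKs hK⟩
  -- transport along the isomorphism between `Perm (Fin n)` and its subgroup `⊤`
  let e : (⊤ : Subgroup (Equiv.Perm (Fin n))) ≃* Equiv.Perm (Fin n) := Subgroup.topEquiv
  have hs : ∀ L : Subgroup (Equiv.Perm (Fin n)), Group.IsSolvable L →
      Group.IsSolvable (L.comap e.toMonoidHom) := fun L _ =>
    Group.isSolvable_of_isSolvable_injective (f := (e.toMonoidHom.subgroupComap L)) fun x y hxy =>
      Subtype.ext (e.injective (congrArg (fun z : L => (z : Equiv.Perm (Fin n))) hxy))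
  have hc : ∀ L : Subgroup (Equiv.Perm (Fin n)), IsCoatom L → IsCoatom (L.comap e.toMonoidHom) :=
    fun L hL => by
      have h := (e.symm.mapSubgroup.isCoatom_iff L).2 hL
      exact (Subgroup.comap_equiv_eq_map_symm e L).symm ▸ h
  obtain ⟨g, hg⟩ := exists_even_conj_of_isCoatom hn' le_top (H.comap e.toMonoidHom)
    (K.comap e.toMonoidHom) (hs H hHs) (hc H hH) (hs K hKs) (hc K hK)
  refine ⟨g, ?_⟩
  rw [eq_bot_iff]
  rintro x ⟨hxH, k, hkK, hkx⟩
  have hx : e.symm x ∈ H.comap e.toMonoidHom ⊓ conjSub g (K.comap e.toMonoidHom) :=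
    ⟨hxH, e.symm k, hkK, Subtype.ext hkx⟩
  rw [hg, Subgroup.mem_bot] at hx
  rw [Subgroup.mem_bot]
  exact congrArg Subtype.val hx
end
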